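/- arXiv:1805.09539 — 2 statements merged into one kernel-verified Lean document; each statement's English description precedes it below -/
import Mathlib

section
/- Let $\mathcal{L}$ be a set of pairwise intersecting $k$-subspaces of $\mathrm{PG}(n,q)$ with $n \geq 2k+1$, each pair meeting in at least a point. Then $|\mathcal{L}| \leq \binom{n}{k}_q$, with equality if and only if $\mathcal{L}$ consists of all $k$-subspaces through a fixed point, or $n = 2k+1$ and $\mathcal{L}$ consists of all $k$-subspaces contained in a fixed hyperplane. -/
open Finset
open scoped Classical

/-- The Gaussian binomial coefficient `[a choose b]_q`, defined via the
`q`-Pascal recurrence `[a+1, b+1]_q = [a, b]_q + q^(b+1) * [a, b+1]_q`. -/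
def gbinom (q : ℕ) : ℕ → ℕ → ℕ
  | _, 0 => 1
  | 0, _+1 => 0
  | a+1, b+1 => gbinom q a b + q^(b+1) * gbinom q a (b+1)

/-!
The bound is Hoffman's ratio bound for the `q`-Kneser graph on the `d`-dimensional subspaces of `V`,
where `d = k + 1`. The indicators of the families of subspaces containing a fixed `T` with
`dim T < t` span a filtration that the adjacency operator preserves, acting as a scalar on each
quotient, and the least of these scalars is the one on the quotient for `dim T = 1`.

Equality forces the indicator of `L` into the second step of the filtration, so it is given by a
weight `w` on vectors: `∑ v ∈ W, w v` is `1` if `W ∈ L` and `0` otherwise. If `dim A = dim V - d`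
and `A` contains a member of `L`, then every `d`-dimensional subspace disjoint from `A` has weight
sum `0`, and double counting shows that `w` is constant on the cosets of `A` other than `A`. If
these `A` span `V` and have no common nonzero vector, then `w` is constant on nonzero vectors, so
all weight sums are equal, which is absurd. A common nonzero vector lies in every member of `L`,
and a proper span is possible only when `dim V = 2 * d`, in which case it contains all of them.
-/

namespace ErdosKoRado

section GaussianBinomial

variable {R : Type*} [CommRing R]

theorem prod_pow_succ_sub_pow (x : R) (m k : ℕ) :
    ∏ i ∈ range (k + 1), (x ^ (m + 1) - x ^ i) =
      (x ^ (m + 1) - 1) * x ^ k * ∏ i ∈ range k, (x ^ m - x ^ i) := by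
  have factor : ∀ i, x ^ (m + 1) - x ^ (i + 1) = x * (x ^ m - x ^ i) := fun i => by ring
  rw [prod_range_succ']
  simp only [factor, prod_mul_distrib, prod_const, card_range]
  ring

theorem gbinom_mul_prod (q n k : ℕ) :
    (gbinom q n k : R) * ∏ i ∈ range k, ((q : R) ^ k - (q : R) ^ i) =
      ∏ i ∈ range k, ((q : R) ^ n - (q : R) ^ i) := by
  induction n generalizing k with
  | zero =>
    cases k with
    | zero => simp [gbinom]
    | succ k => simp [gbinom, prod_range_succ']
  | succ n ih =>
    cases k with
    | zero => simp [gbinom]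
    | succ k =>
      have ih_succ := ih (k + 1)
      rw [prod_range_succ (fun i => (q : R) ^ n - (q : R) ^ i), ← ih k] at ih_succ
      rw [prod_pow_succ_sub_pow] at ih_succ
      rw [prod_pow_succ_sub_pow, prod_pow_succ_sub_pow, ← ih k]
      simp only [gbinom, Nat.cast_add, Nat.cast_mul, Nat.cast_pow]
      linear_combination (q : R) ^ (k + 1) * ih_succ

end GaussianBinomial

section NumExtensions

/-- The number of `d`-dimensional subspaces of an `h`-dimensional space over a field of order `q`
that contain a fixed `j`-dimensional subspace and meet trivially a fixed `a`-dimensional subspace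
disjoint from the latter; see `card_extensions`. -/
noncomputable def numExtensions (q : ℝ) (h a d j : ℕ) : ℝ :=
  ∏ i ∈ Ico j d, (q ^ h - q ^ (i + a)) / (q ^ d - q ^ i)

variable {q : ℝ}

theorem numExtensions_self (h a d : ℕ) : numExtensions q h a d d = 1 := by
  simp [numExtensions]

theorem numExtensions_mul (hq : 1 < q) (h a : ℕ) {d j : ℕ} (hj : j < d) :
    numExtensions q h a d j * (q ^ d - q ^ j) =
      (q ^ h - q ^ (j + a)) * numExtensions q h a d (j + 1) := by
  have hne : q ^ d - q ^ j ≠ 0 := (sub_pos.2 (pow_lt_pow_right₀ hq hj)).ne'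
  rw [numExtensions, numExtensions, prod_eq_prod_Ico_succ_bot hj]
  field_simp

theorem numExtensions_pos (hq : 1 < q) {h a d : ℕ} (had : a + d ≤ h) (j : ℕ) :
    0 < numExtensions q h a d j := by
  refine prod_pos fun i hi => ?_
  have hid : i < d := (mem_Ico.1 hi).2
  exact div_pos (sub_pos.2 (pow_lt_pow_right₀ hq (by lia)))
    (sub_pos.2 (pow_lt_pow_right₀ hq hid))

theorem numExtensions_succ_succ (hq : q ≠ 0) (h a d j : ℕ) :
    numExtensions q (h + 1) a (d + 1) (j + 1) = numExtensions q h a d j := by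
  rw [numExtensions, numExtensions, ← prod_Ico_add' _ j d 1]
  refine prod_congr rfl fun i _ => ?_
  rw [show q ^ (h + 1) - q ^ (i + 1 + a) = (q ^ h - q ^ (i + a)) * q by ring,
    show q ^ (d + 1) - q ^ (i + 1) = (q ^ d - q ^ i) * q by ring, mul_div_mul_right _ _ hq]

theorem numExtensions_zero_eq_gbinom {q : ℕ} (hq : 1 < q) (h d : ℕ) :
    numExtensions q h 0 d 0 = gbinom q h d := by
  have hne : ∏ i ∈ range d, ((q : ℝ) ^ d - (q : ℝ) ^ i) ≠ 0 := by
    refine prod_ne_zero_iff.2 fun i hi => (sub_pos.2 ?_).ne'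
    exact pow_lt_pow_right₀ (by exact_mod_cast hq) (mem_range.1 hi)
  simp only [numExtensions, add_zero, ← range_eq_Ico, prod_div_distrib]
  rw [div_eq_iff hne, gbinom_mul_prod]

theorem gbinom_two_mul_add_one_succ {q : ℕ} (hq : 1 < q) (k : ℕ) :
    gbinom q (2 * k + 1) (k + 1) = gbinom q (2 * k + 1) k := by
  have hq' : (1 : ℝ) < q := by exact_mod_cast hq
  have hne : ∏ i ∈ range (k + 1), ((q : ℝ) ^ (k + 1) - (q : ℝ) ^ i) ≠ 0 :=
    prod_ne_zero_iff.2 fun i hi => (sub_pos.2 (pow_lt_pow_right₀ hq' (mem_range.1 hi))).ne'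
  have key : (gbinom q (2 * k + 1) (k + 1) : ℝ) = gbinom q (2 * k + 1) k := by
    refine mul_right_cancel₀ hne ?_
    rw [gbinom_mul_prod, prod_range_succ, ← gbinom_mul_prod, prod_pow_succ_sub_pow]
    ring
  exact_mod_cast key

end NumExtensions

variable {F V : Type*} [Field F] [AddCommGroup V] [Module F V]

variable (F V) in
/-- The `d`-dimensional subspaces of `V`, that is, the `(d - 1)`-subspaces of the projective space
of `V`. -/
abbrev SubspaceOfDim (d : ℕ) : Type _ := {W : Submodule F V // Module.finrank F W = d}

section Subspaces

theorem finrank_sup_of_disjoint [FiniteDimensional F V] {S T : Submodule F V}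
    (h : Disjoint S T) :
    Module.finrank F ↥(S ⊔ T) = Module.finrank F S + Module.finrank F T := by
  rw [← Submodule.finrank_sup_add_finrank_inf_eq, h.eq_bot, finrank_bot, add_zero]

theorem mem_sup_iff_of_disjoint {S T W : Submodule F V} (hSW : S ≤ W) (hWT : Disjoint W T)
    {v : V} (hv : v ∈ W) : v ∈ S ⊔ T ↔ v ∈ S := by
  have modular : (S ⊔ T) ⊓ W = S := by
    rw [sup_inf_assoc_of_le _ hSW, inf_comm, hWT.eq_bot, sup_bot_eq]
  rw [← modular, Submodule.mem_inf, modular, and_iff_left hv]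

theorem disjoint_sup_span_singleton {S T : Submodule F V} (hST : Disjoint S T) {v : V}
    (hv : v ∉ S ⊔ T) : Disjoint (S ⊔ F ∙ v) T := by
  have hv0 : v ≠ 0 := fun h => hv (h ▸ zero_mem _)
  rw [sup_comm]
  refine Disjoint.disjoint_sup_left_of_disjoint_sup_right hST ?_
  exact ((Submodule.disjoint_span_singleton' hv0).2 hv).symm

theorem exists_between_finrank_eq [FiniteDimensional F V] {S T : Submodule F V} (hST : S ≤ T)
    {m : ℕ} (hSm : Module.finrank F S ≤ m) (hmT : m ≤ Module.finrank F T) :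
    ∃ R, S ≤ R ∧ R ≤ T ∧ Module.finrank F R = m := by
  induction m, hSm using Nat.le_induction with
  | base => exact ⟨S, le_rfl, hST, rfl⟩
  | succ m _ ih =>
    obtain ⟨R, hSR, hRT, hR⟩ := ih (by lia)
    have hlt : R < T := lt_of_le_of_ne hRT (by rintro rfl; lia)
    obtain ⟨v, hvT, hvR⟩ := SetLike.exists_of_lt hlt
    refine ⟨R ⊔ F ∙ v, hSR.trans le_sup_left, sup_le hRT ?_, ?_⟩
    · rwa [Submodule.span_singleton_le_iff_mem]
    · rw [Submodule.finrank_sup_span_singleton hvR, hR]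

end Subspaces

section Counting

variable {d : ℕ} [Fintype (SubspaceOfDim F V d)]

/-- The `d`-dimensional subspaces of `H` that contain `T` and meet `A` trivially. -/
noncomputable def extensions (d : ℕ) [Fintype (SubspaceOfDim F V d)] (T H A : Submodule F V) :
    Finset (SubspaceOfDim F V d) :=
  {W | T ≤ W.1 ∧ W.1 ≤ H ∧ Disjoint W.1 A}

theorem mem_extensions {T H A : Submodule F V} {W : SubspaceOfDim F V d} :
    W ∈ extensions d T H A ↔ T ≤ W.1 ∧ W.1 ≤ H ∧ Disjoint W.1 A := by
  simp [extensions]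


theorem card_filter_mem [Fintype F] [Fintype V] (S : Submodule F V) :
    #{v | v ∈ S} = Fintype.card F ^ Module.finrank F S := by
  rw [← Module.card_eq_pow_finrank, Fintype.card_subtype]

theorem card_filter_mem_and_notMem [Fintype F] [Fintype V] {S T : Submodule F V} (hST : S ≤ T) :
    (#{v | v ∈ T ∧ v ∉ S} : ℝ) =
      (Fintype.card F : ℝ) ^ Module.finrank F T - (Fintype.card F : ℝ) ^ Module.finrank F S := by
  have hsub : ({v | v ∈ S} : Finset V) ⊆ ({v | v ∈ T} : Finset V) :=
    monotone_filter_right _ fun v _ => @hST v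
  have hsdiff : ({v | v ∈ T ∧ v ∉ S} : Finset V) =
      ({v | v ∈ T} : Finset V) \ ({v | v ∈ S} : Finset V) := by
    ext v
    simp
  rw [hsdiff, cast_card_sdiff hsub, card_filter_mem, card_filter_mem]
  push_cast
  rfl

variable [Finite V]

theorem card_extensions_mul [Fintype F] {T H A : Submodule F V} (hT : T ≤ H) (hA : A ≤ H)
    (hTA : Disjoint T A) {c : ℝ}
    (hc : ∀ v ∈ H, v ∉ T ⊔ A → (#(extensions d (T ⊔ F ∙ v) H A) : ℝ) = c) :
    (#(extensions d T H A) : ℝ) *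
        ((Fintype.card F : ℝ) ^ d - (Fintype.card F : ℝ) ^ Module.finrank F T) =
      ((Fintype.card F : ℝ) ^ Module.finrank F H -
        (Fintype.card F : ℝ) ^ (Module.finrank F T + Module.finrank F A)) * c := by
  let _ := Fintype.ofFinite V
  set s : Finset V := {v | v ∈ H ∧ v ∉ T ⊔ A}
  have above : ∀ v ∈ s,
      (#((extensions d T H A).bipartiteAbove (fun v W => v ∈ W.1) v) : ℝ) = c := by
    intro v hv
    obtain ⟨hvH, hvTA⟩ : v ∈ H ∧ v ∉ T ⊔ A := by simpa [s] using hv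
    rw [← hc v hvH hvTA]
    congr 2
    ext W
    simp only [mem_bipartiteAbove, mem_extensions, sup_le_iff,
      Submodule.span_singleton_le_iff_mem]
    tauto
  have below : ∀ W ∈ extensions d T H A, (#(s.bipartiteBelow (fun v W => v ∈ W.1) W) : ℝ) =
      (Fintype.card F : ℝ) ^ d - (Fintype.card F : ℝ) ^ Module.finrank F T := by
    intro W hW
    obtain ⟨hTW, hWH, hWA⟩ := mem_extensions.1 hW
    have hcard := card_filter_mem_and_notMem hTW
    rw [W.2] at hcard
    rw [← hcard]
    congr 2
    ext v
    have hmem : v ∈ W.1 → (v ∈ T ⊔ A ↔ v ∈ T) := mem_sup_iff_of_disjoint hTW hWA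
    have hWH' : v ∈ W.1 → v ∈ H := @hWH v
    simp only [s, mem_bipartiteBelow, mem_filter, mem_univ, true_and]
    tauto
  have count := congrArg (Nat.cast (R := ℝ))
    (sum_card_bipartiteAbove_eq_sum_card_bipartiteBelow (s := s) (t := extensions d T H A)
      fun v W => v ∈ W.1)
  push_cast at count
  rw [sum_congr rfl above, sum_congr rfl below, sum_const, sum_const, nsmul_eq_mul, nsmul_eq_mul,
    card_filter_mem_and_notMem (sup_le hT hA), finrank_sup_of_disjoint hTA] at count
  exact count.symm

theorem card_extensions [Fintype F] {T H A : Submodule F V} (hT : T ≤ H) (hA : A ≤ H)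
    (hTA : Disjoint T A) (hTd : Module.finrank F T ≤ d) :
    (#(extensions d T H A) : ℝ) =
      numExtensions (Fintype.card F) (Module.finrank F H) (Module.finrank F A) d
        (Module.finrank F T) := by
  have hq : (1 : ℝ) < Fintype.card F := by exact_mod_cast Fintype.one_lt_card
  induction hm : d - Module.finrank F T generalizing T with
  | zero =>
    have hTd' : Module.finrank F T = d := by lia
    have hsingle : extensions d T H A = {⟨T, hTd'⟩} := by
      ext W
      rw [mem_extensions, mem_singleton]
      constructor
      · rintro ⟨hTW, -, -⟩
        exact Subtype.ext (Submodule.eq_of_le_of_finrank_eq hTW (hTd'.trans W.2.symm)).symm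
      · rintro rfl
        exact ⟨le_rfl, hT, hTA⟩
    rw [hsingle, hTd', numExtensions_self, card_singleton, Nat.cast_one]
  | succ m ih =>
    have hlt : Module.finrank F T < d := by lia
    have step := card_extensions_mul (d := d) hT hA hTA fun v hvH hv => by
      have hvT : v ∉ T := fun h => hv (le_sup_left (a := T) h)
      have hdim := Submodule.finrank_sup_span_singleton hvT
      have hle : T ⊔ F ∙ v ≤ H := sup_le hT (by rwa [Submodule.span_singleton_le_iff_mem])
      rw [ih hle (disjoint_sup_span_singleton hTA hv) (by lia) (by lia), hdim]
    rw [← numExtensions_mul hq _ _ hlt] at step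
    exact mul_right_cancel₀ (sub_pos.2 (pow_lt_pow_right₀ hq hlt)).ne' step

theorem card_extensions_eq_of_finrank_eq [Finite F] {T T' H A : Submodule F V} (hT : T ≤ H)
    (hT' : T' ≤ H) (hA : A ≤ H) (hTA : Disjoint T A) (hTA' : Disjoint T' A)
    (h : Module.finrank F T = Module.finrank F T') :
    #(extensions d T H A) = #(extensions d T' H A) := by
  let _ := Fintype.ofFinite F
  rcases le_or_gt (Module.finrank F T) d with hTd | hTd
  · have := (card_extensions hT hA hTA hTd).trans
      ((card_extensions hT' hA hTA' (h ▸ hTd)).trans (by rw [h])).symm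
    exact_mod_cast this
  · have empty : ∀ S : Submodule F V, d < Module.finrank F S → extensions d S H A = ∅ :=
      fun S hS => eq_empty_of_forall_notMem fun W hW =>
        (Submodule.finrank_mono (mem_extensions.1 hW).1).not_gt (W.2.trans_lt hS)
    rw [empty T hTd, empty T' (h ▸ hTd)]

end Counting

section Moebius

/-- The value of the Möbius function of the lattice of subspaces of a vector space over a field of
order `q` on an interval of length `i`. -/
def moebius (q : ℝ) (i : ℕ) : ℝ :=
  (-1) ^ i * q ^ i.choose 2

theorem moebius_zero (q : ℝ) : moebius q 0 = 1 := by
  simp [moebius]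

theorem moebius_succ (q : ℝ) (i : ℕ) : moebius q (i + 1) = -q ^ i * moebius q i := by
  simp only [moebius, Nat.choose_succ_succ' i 1, Nat.choose_one_right]
  ring

theorem numExtensions_succ_one {q : ℝ} (hq : 1 < q) (i : ℕ) :
    numExtensions q (i + 1) 1 i 0 = q ^ i := by
  have factor : ∀ l ∈ Ico 0 i, (q ^ (i + 1) - q ^ (l + 1)) / (q ^ i - q ^ l) = q := by
    intro l hl
    have hne : q ^ i - q ^ l ≠ 0 :=
      (sub_pos.2 (pow_lt_pow_right₀ hq (mem_Ico.1 hl).2)).ne'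
    rw [div_eq_iff hne]
    ring
  rw [numExtensions, prod_congr rfl factor, prod_const, Nat.card_Ico, tsub_zero]

variable [Fintype F] [Finite V] [Fintype (Submodule F V)]

theorem card_hyperplanes_not_ge {v : V} (hv : v ≠ 0) {R : Submodule F V} (hvR : v ∈ R) {i : ℕ}
    (hR : Module.finrank F R = i + 1) :
    (#{S : Submodule F V | ¬F ∙ v ≤ S ∧ S ⊔ F ∙ v = R} : ℝ) = (Fintype.card F : ℝ) ^ i := by
  let _ := Fintype.ofFinite (SubspaceOfDim F V i)
  have hq : (1 : ℝ) < Fintype.card F := by exact_mod_cast Fintype.one_lt_card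
  have hvR' : F ∙ v ≤ R := by rwa [Submodule.span_singleton_le_iff_mem]
  have himage : ({S | ¬F ∙ v ≤ S ∧ S ⊔ F ∙ v = R} : Finset (Submodule F V)) =
      (extensions i ⊥ R (F ∙ v)).map (Function.Embedding.subtype _) := by
    ext S
    simp only [mem_filter, mem_univ, true_and, mem_map, mem_extensions, bot_le,
      Submodule.disjoint_span_singleton' hv, Submodule.span_singleton_le_iff_mem]
    constructor
    · rintro ⟨hvS, rfl⟩
      rw [Submodule.finrank_sup_span_singleton hvS] at hR
      exact ⟨⟨S, by lia⟩, ⟨le_sup_left, hvS⟩, rfl⟩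
    · rintro ⟨S, ⟨hSR, hvS⟩, rfl⟩
      refine ⟨hvS, Submodule.eq_of_le_of_finrank_eq (sup_le hSR hvR') ?_⟩
      rw [Function.Embedding.subtype_apply, Submodule.finrank_sup_span_singleton hvS, S.2, hR]
  rw [himage, card_map, card_extensions bot_le hvR' disjoint_bot_left (by simp), hR, finrank_bot,
    finrank_span_singleton hv, numExtensions_succ_one hq]

theorem sum_moebius_hyperplanes_not_ge {v : V} (hv : v ≠ 0) {R : Submodule F V} (hvR : v ∈ R) :
    ∑ S with ¬F ∙ v ≤ S ∧ S ⊔ F ∙ v = R, moebius (Fintype.card F) (Module.finrank F S) =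
      -moebius (Fintype.card F) (Module.finrank F R) := by
  obtain ⟨i, hi⟩ : ∃ i, Module.finrank F R = i + 1 :=
    Nat.exists_eq_succ_of_ne_zero fun h => hv (by simpa [Submodule.finrank_eq_zero.1 h] using hvR)
  have hterm : ∀ S ∈ ({S | ¬F ∙ v ≤ S ∧ S ⊔ F ∙ v = R} : Finset (Submodule F V)),
      moebius (Fintype.card F) (Module.finrank F S) = moebius (Fintype.card F) i := by
    intro S hS
    obtain ⟨hvS, rfl⟩ := (mem_filter.1 hS).2
    rw [Submodule.span_singleton_le_iff_mem] at hvS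
    rw [Submodule.finrank_sup_span_singleton hvS] at hi
    rw [Nat.succ_injective hi]
  rw [sum_congr rfl hterm, sum_const, nsmul_eq_mul, card_hyperplanes_not_ge hv hvR hi, hi,
    moebius_succ, neg_mul, neg_neg]

theorem sum_moebius_finrank (R : Submodule F V) :
    ∑ S with S ≤ R, moebius (Fintype.card F) (Module.finrank F S) =
      if R = ⊥ then 1 else 0 := by
  split_ifs with hR
  · simp [hR, filter_eq', moebius_zero]
  obtain ⟨v, hvR, hv⟩ := Submodule.exists_mem_ne_zero_of_ne_bot hR
  have fiber : ∀ S' ∈ ({S' | S' ≤ R ∧ F ∙ v ≤ S'} : Finset (Submodule F V)),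
      ∑ S with (S ≤ R ∧ ¬F ∙ v ≤ S) ∧ S ⊔ F ∙ v = S',
        moebius (Fintype.card F) (Module.finrank F S) =
      -moebius (Fintype.card F) (Module.finrank F S') := by
    intro S' hS'
    obtain ⟨hS'R, hvS'⟩ := (mem_filter.1 hS').2
    rw [← sum_moebius_hyperplanes_not_ge hv (Submodule.span_singleton_le_iff_mem _ _ |>.1 hvS')]
    refine sum_congr (filter_congr fun S _ => ?_) fun _ _ => rfl
    exact ⟨fun h => ⟨h.1.2, h.2⟩, fun h => ⟨⟨(le_sup_left.trans h.2.le).trans hS'R, h.1⟩, h.2⟩⟩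
  have hmaps : ∀ S ∈ ({S | S ≤ R ∧ ¬F ∙ v ≤ S} : Finset (Submodule F V)),
      S ⊔ F ∙ v ∈ ({S' | S' ≤ R ∧ F ∙ v ≤ S'} : Finset (Submodule F V)) := by
    intro S hS
    have hSR : S ≤ R := (mem_filter.1 hS).2.1
    have hvR' : F ∙ v ≤ R := by rwa [Submodule.span_singleton_le_iff_mem]
    exact mem_filter.2 ⟨mem_univ _, sup_le hSR hvR', le_sup_right⟩
  rw [← sum_filter_add_sum_filter_not _ (fun S => F ∙ v ≤ S), filter_filter, filter_filter,
    ← sum_fiberwise_of_maps_to hmaps]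
  simp only [filter_filter]
  rw [sum_congr rfl fiber, sum_neg_distrib, add_neg_cancel]

end Moebius

section SymmetricMaps

open scoped InnerProductSpace

variable {E : Type*} [NormedAddCommGroup E] [InnerProductSpace ℝ E] {T : E →ₗ[ℝ] E}

theorem map_eq_smul_of_mem_orthogonal (hT : T.IsSymmetric) {P : Submodule ℝ E}
    (hP : ∀ x ∈ P, T x ∈ P) {l : ℝ} {h : E} (hh : h ∈ Pᗮ) (hTh : T h - l • h ∈ P) :
    T h = l • h := by
  have hTh' : T h - l • h ∈ Pᗮ := by
    refine Submodule.sub_mem _ (fun x hx => ?_) (Submodule.smul_mem _ l hh)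
    rw [← hT]
    exact hh _ (hP x hx)
  exact sub_eq_zero.1 (inner_self_eq_zero.1 (hTh' _ hTh))

theorem inner_map_add_self_of_mem_orthogonal {P : Submodule ℝ E} (hP : ∀ x ∈ P, T x ∈ P) {l : ℝ}
    {g h : E} (hg : g ∈ P) (hh : h ∈ Pᗮ) (hTh : T h = l • h) :
    ⟪T (g + h), g + h⟫_ℝ = ⟪T g, g⟫_ℝ + l * ⟪h, h⟫_ℝ := by
  have hhg : ⟪h, g⟫_ℝ = 0 := by rw [real_inner_comm, hh g hg]
  have hTgh : ⟪T g, h⟫_ℝ = 0 := hh _ (hP g hg)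
  simp only [map_add, inner_add_left, inner_add_right, hTh, real_inner_smul_left, hTgh, hhg]
  ring

/- With `e` the all-one vector and `χ` the indicator vector of a coclique, this is Hoffman's ratio
bound; it is the estimate for the projection of `χ` to the orthogonal complement of `e`. -/
theorem ratio_bound (hT : T.IsSymmetric) {e χ : E} {c₀ c₁ : ℝ} (hc₁ : 0 ≤ c₁)
    (hTe : T e = c₀ • e) (heχ : ⟪e, χ⟫_ℝ = ⟪χ, χ⟫_ℝ) (hTχ : ⟪T χ, χ⟫_ℝ = 0)
    {S : Submodule ℝ E} (heS : e ∈ S)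
    (hS : ∀ f, ⟪e, f⟫_ℝ = 0 →
      -c₁ * ⟪f, f⟫_ℝ ≤ ⟪T f, f⟫_ℝ ∧ (⟪T f, f⟫_ℝ = -c₁ * ⟪f, f⟫_ℝ → f ∈ S)) :
    (c₀ + c₁) * ⟪χ, χ⟫_ℝ ≤ c₁ * ⟪e, e⟫_ℝ ∧
      ((c₀ + c₁) * ⟪χ, χ⟫_ℝ = c₁ * ⟪e, e⟫_ℝ → χ ∈ S) := by
  set s := ⟪χ, χ⟫_ℝ with hs
  set N := ⟪e, e⟫_ℝ with hN
  have hs0 : 0 ≤ s := real_inner_self_nonneg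
  have hN0 : 0 ≤ N := real_inner_self_nonneg
  rcases hN0.eq_or_lt with hN0 | hN0
  · have he : e = 0 := inner_self_eq_zero.1 hN0.symm
    have hs : s = 0 := by rw [← heχ, he, inner_zero_left]
    rw [inner_self_eq_zero.1 hs, ← hN0, hs]
    simp
  have hχe : ⟪χ, e⟫_ℝ = s := by rw [real_inner_comm, heχ]
  have hTχe : ⟪T χ, e⟫_ℝ = c₀ * s := by rw [hT, hTe, inner_smul_right, hχe]
  set f := N • χ - s • e with hf
  have hef : ⟪e, f⟫_ℝ = 0 := by
    rw [hf, inner_sub_right, inner_smul_right, inner_smul_right, heχ]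
    ring
  have hff : ⟪f, f⟫_ℝ = N * s * (N - s) := by
    simp only [hf, inner_sub_left, inner_sub_right, real_inner_smul_left, real_inner_smul_right,
      heχ, hχe, ← hs, ← hN]
    ring
  have hTf : ⟪T f, f⟫_ℝ = -(N * s * (c₀ * s)) := by
    simp only [hf, map_sub, map_smul, inner_sub_left, inner_sub_right, real_inner_smul_left,
      real_inner_smul_right, hTe, heχ, hTχ, hTχe, ← hN]
    ring
  obtain ⟨hle, heq⟩ := hS f hef
  rw [hff, hTf] at hle heq
  constructor
  · rcases hs0.eq_or_lt with hs0 | hs0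
    · rw [← hs0, mul_zero]
      positivity
    · refine le_of_mul_le_mul_left ?_ (mul_pos hN0 hs0)
      linarith
  · intro h
    have hfS : f ∈ S := heq (by linear_combination -(N * s) * h)
    have hNχ : N • χ ∈ S := by
      simpa [hf] using S.add_mem hfS (S.smul_mem s heS)
    exact (S.smul_mem_iff hN0.ne').1 hNχ

variable [FiniteDimensional ℝ E]

/- `U (m + 1)` is the orthogonal sum of `U m` and a space on which `T` acts as `l m`, so by
induction `T` is diagonal on `U m` with eigenvalues among the `l j`, `j < m`. -/
theorem mul_inner_self_le_inner_map_self (hT : T.IsSymmetric) {U : ℕ → Submodule ℝ E}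
    (hU : Monotone U) {l : ℕ → ℝ} {m : ℕ}
    (hTU : ∀ j < m, ∀ x ∈ U (j + 1), T x - l j • x ∈ U j)
    (hl : ∀ j, 2 ≤ j → j < m → l 1 < l j) {f : E} (hf : f ∈ U m) (hperp : f ∈ (U 1)ᗮ) :
    l 1 * ⟪f, f⟫_ℝ ≤ ⟪T f, f⟫_ℝ ∧ (⟪T f, f⟫_ℝ = l 1 * ⟪f, f⟫_ℝ → f ∈ U 2) := by
  induction m generalizing f with
  | zero =>
    have hf0 : f = 0 := inner_self_eq_zero.1 (hperp f (hU zero_le_one hf))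
    simp [hf0]
  | succ m ih =>
    rcases m.eq_zero_or_pos with rfl | hm
    · have hf0 : f = 0 := inner_self_eq_zero.1 (hperp f hf)
      simp [hf0]
    have invariant : ∀ x ∈ U m, T x ∈ U m := by
      intro x hx
      obtain ⟨j, rfl⟩ := Nat.exists_eq_add_one.2 hm
      have := (U (j + 1)).add_mem (hU j.le_succ (hTU j (by lia) x hx))
        ((U (j + 1)).smul_mem (l j) hx)
      rwa [sub_add_cancel] at this
    obtain ⟨g, hg, h, hh, rfl⟩ := (U m).exists_add_mem_mem_orthogonal f
    have hhU : h ∈ U (m + 1) := by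
      simpa using (U (m + 1)).sub_mem hf (hU m.le_succ hg)
    have hTh : T h = l m • h :=
      map_eq_smul_of_mem_orthogonal hT invariant hh (hTU m m.lt_succ_self h hhU)
    have hg_perp : g ∈ (U 1)ᗮ := by
      simpa using (U 1)ᗮ.sub_mem hperp (Submodule.orthogonal_le (hU hm) hh)
    obtain ⟨ih_le, ih_eq⟩ := ih (fun j hj => hTU j (by lia)) (fun j hj hjm => hl j hj (by lia))
      hg hg_perp
    have hgh : ⟪g, h⟫_ℝ = 0 := hh g hg
    have hpos : 0 ≤ ⟪h, h⟫_ℝ := real_inner_self_nonneg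
    rw [real_inner_add_add_self, hgh, mul_zero, add_zero,
      inner_map_add_self_of_mem_orthogonal invariant hg hh hTh]
    obtain rfl | hm2 : m = 1 ∨ 2 ≤ m := by lia
    · exact ⟨by linarith, fun _ => hf⟩
    have hlm : l 1 < l m := hl m hm2 m.lt_succ_self
    refine ⟨by nlinarith, fun heq => ?_⟩
    have hh0 : ⟪h, h⟫_ℝ = 0 := by nlinarith
    rw [inner_self_eq_zero.1 hh0, add_zero]
    exact ih_eq (by rw [hh0] at heq; linarith)

end SymmetricMaps

section Kneser

/-- The `j`-th eigenvalue of the `q`-Kneser graph, whose vertices are the `d`-dimensional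
subspaces of an `N`-dimensional space over a field of order `q` and whose edges join the disjoint
ones; see `kneser_sub_smul_mem_degreeLT`. -/
noncomputable def kneserEigenvalue (q : ℝ) (N d j : ℕ) : ℝ :=
  moebius q j * numExtensions q N d d j

section Eigenvalues

variable {q : ℝ} {N d : ℕ}

theorem kneserEigenvalue_succ_mul (hq : 1 < q) {j : ℕ} (hj : j < d) :
    kneserEigenvalue q N d (j + 1) * (q ^ N - q ^ (j + d)) =
      -(q ^ j * (q ^ d - q ^ j)) * kneserEigenvalue q N d j := by
  have h := numExtensions_mul hq N d hj
  rw [kneserEigenvalue, kneserEigenvalue, moebius_succ]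
  linear_combination q ^ j * moebius q j * h

theorem kneserEigenvalue_one_neg (hq : 1 < q) (hdN : 2 * d ≤ N) :
    kneserEigenvalue q N d 1 < 0 := by
  have hpos := numExtensions_pos hq (by lia : d + d ≤ N) 1
  rw [kneserEigenvalue, moebius_succ, moebius_zero]
  linarith

theorem abs_kneserEigenvalue_succ_lt (hq : 1 < q) (hdN : 2 * d ≤ N) {j : ℕ} (hj : j < d) :
    |kneserEigenvalue q N d (j + 1)| < |kneserEigenvalue q N d j| := by
  have hq0 : 0 < q := zero_lt_one.trans hq
  have hjd : q ^ j < q ^ d := pow_lt_pow_right₀ hq hj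
  have hdN' : q ^ d * q ^ d ≤ q ^ N := by
    rw [← pow_add]
    exact pow_le_pow_right₀ hq.le (by lia)
  have hlt : q ^ j * (q ^ d - q ^ j) < q ^ N - q ^ (j + d) := by
    rw [pow_add]
    nlinarith [sq_pos_of_pos (sub_pos.2 hjd)]
  have hnum : 0 < q ^ j * (q ^ d - q ^ j) := mul_pos (pow_pos hq0 j) (sub_pos.2 hjd)
  have hne : kneserEigenvalue q N d j ≠ 0 :=
    mul_ne_zero (by simp [moebius, hq0.ne']) (numExtensions_pos hq (by lia) j).ne'
  have habs := congrArg abs (kneserEigenvalue_succ_mul (N := N) hq hj)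
  rw [abs_mul, abs_mul, abs_neg, abs_of_pos hnum, abs_of_pos (hnum.trans hlt)] at habs
  refine lt_of_mul_lt_mul_right ?_ (hnum.trans hlt).le
  rw [habs, mul_comm]
  exact mul_lt_mul_of_pos_left hlt (abs_pos.2 hne)

theorem kneserEigenvalue_one_lt (hq : 1 < q) (hdN : 2 * d ≤ N) {j : ℕ} (hj : 2 ≤ j)
    (hjd : j ≤ d) : kneserEigenvalue q N d 1 < kneserEigenvalue q N d j := by
  have hanti : StrictAntiOn (fun i => |kneserEigenvalue q N d i|) (Set.Icc 1 d) :=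
    strictAntiOn_of_add_one_lt Set.ordConnected_Icc fun i _ _ hi =>
      abs_kneserEigenvalue_succ_lt hq hdN hi.2
  have habs : |kneserEigenvalue q N d j| < |kneserEigenvalue q N d 1| :=
    hanti ⟨le_rfl, by lia⟩ ⟨by lia, hjd⟩ hj
  rw [abs_of_neg (kneserEigenvalue_one_neg hq hdN)] at habs
  linarith [neg_abs_le (kneserEigenvalue q N d j)]

end Eigenvalues

/-- The vector with entries `1` where `p` holds and `0` elsewhere. -/
noncomputable def indicatorVec {ι : Type*} (p : ι → Prop) : EuclideanSpace ℝ ι :=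
  WithLp.toLp 2 fun i => if p i then 1 else 0

theorem indicatorVec_apply {ι : Type*} (p : ι → Prop) (i : ι) :
    indicatorVec p i = if p i then 1 else 0 :=
  rfl

open scoped InnerProductSpace in
theorem inner_indicatorVec {ι : Type*} [Fintype ι] (p p' : ι → Prop) :
    ⟪indicatorVec p, indicatorVec p'⟫_ℝ = #{i | p i ∧ p' i} := by
  simp [PiLp.inner_apply, indicatorVec_apply, ← ite_and]

/-- The indicator vector of the `d`-dimensional subspaces that contain `T`. -/
noncomputable abbrev aboveVec (d : ℕ) (T : Submodule F V) :
    EuclideanSpace ℝ (SubspaceOfDim F V d) :=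
  indicatorVec fun W => T ≤ W.1

/-- The indicator vector of the `d`-dimensional subspaces that meet `T` trivially. -/
noncomputable abbrev disjointVec (d : ℕ) (T : Submodule F V) :
    EuclideanSpace ℝ (SubspaceOfDim F V d) :=
  indicatorVec fun W => Disjoint T W.1

variable (F V) in
/-- The space of functions on the `d`-dimensional subspaces that have degree less than `t` in the
indicators of points; this is a step of the filtration whose quotients are the eigenspaces of the
`q`-Kneser graph. -/
noncomputable def degreeLT (d t : ℕ) : Submodule ℝ (EuclideanSpace ℝ (SubspaceOfDim F V d)) :=
  Submodule.span ℝ {f | ∃ T : Submodule F V, Module.finrank F T < t ∧ f = aboveVec d T}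

variable {d : ℕ}

theorem aboveVec_mem_degreeLT {T : Submodule F V} {t : ℕ} (h : Module.finrank F T < t) :
    aboveVec d T ∈ degreeLT F V d t :=
  Submodule.subset_span ⟨T, h, rfl⟩

theorem degreeLT_mono : Monotone (degreeLT F V d) := fun _ _ hst =>
  Submodule.span_mono fun _ ⟨T, hT, hf⟩ => ⟨T, hT.trans_le hst, hf⟩

theorem degreeLT_one [FiniteDimensional F V] :
    degreeLT F V d 1 = ℝ ∙ aboveVec d (⊥ : Submodule F V) := by
  rw [degreeLT]
  congr 1
  ext f
  simp [Submodule.finrank_eq_zero]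

theorem disjointVec_eq_sum [Fintype F] [Finite V] [Fintype (Submodule F V)]
    (T : Submodule F V) :
    disjointVec d T =
      ∑ S with S ≤ T, moebius (Fintype.card F) (Module.finrank F S) • aboveVec d S := by
  ext W
  have h := sum_moebius_finrank (T ⊓ W.1)
  simp only [le_inf_iff, ← disjoint_iff, ← filter_filter] at h
  rw [sum_filter] at h
  simp [WithLp.ofLp_sum, indicatorVec_apply, h]

theorem degreeLT_succ_self [FiniteDimensional F V] [Finite (SubspaceOfDim F V d)] :
    degreeLT F V d (d + 1) = ⊤ := by
  let _ := Fintype.ofFinite (SubspaceOfDim F V d)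
  refine eq_top_iff.2 fun f _ => ?_
  have hf : f = ∑ W, f W • aboveVec d W.1 := by
    ext W
    have hle : ∀ W' : SubspaceOfDim F V d, W'.1 ≤ W.1 ↔ W' = W := fun W' =>
      ⟨fun h => Subtype.ext (Submodule.eq_of_le_of_finrank_eq h (W'.2.trans W.2.symm)),
        fun h => h ▸ le_rfl⟩
    simp [WithLp.ofLp_sum, indicatorVec_apply, hle]
  rw [hf]
  exact Submodule.sum_mem _ fun W _ =>
    Submodule.smul_mem _ _ (aboveVec_mem_degreeLT (W.2.trans_lt d.lt_succ_self))

variable [Fintype (SubspaceOfDim F V d)]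

variable (F V d) in
/-- The adjacency operator of the `q`-Kneser graph. -/
noncomputable def kneser :
    EuclideanSpace ℝ (SubspaceOfDim F V d) →ₗ[ℝ] EuclideanSpace ℝ (SubspaceOfDim F V d) :=
  Matrix.toEuclideanLin (Matrix.of fun W W' => if Disjoint W.1 W'.1 then 1 else 0)

theorem kneser_apply (f : EuclideanSpace ℝ (SubspaceOfDim F V d)) (W : SubspaceOfDim F V d) :
    kneser F V d f W = ∑ W' with Disjoint W.1 W'.1, f W' := by
  simp [kneser, Matrix.mulVec, dotProduct, sum_filter]

theorem isSymmetric_kneser : (kneser F V d).IsSymmetric := by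
  refine Matrix.isSymmetric_toEuclideanLin_iff.2 ?_
  ext W W'
  simp [disjoint_comm]

open scoped InnerProductSpace in
theorem inner_kneser_indicatorVec_eq_zero {L : Finset (SubspaceOfDim F V d)}
    (hL : ∀ W ∈ L, ∀ W' ∈ L, ¬Disjoint W.1 W'.1) :
    ⟪kneser F V d (indicatorVec (· ∈ L)), indicatorVec (· ∈ L)⟫_ℝ = 0 := by
  rw [PiLp.inner_apply]
  refine sum_eq_zero fun W _ => ?_
  by_cases hW : W ∈ L
  · have : kneser F V d (indicatorVec (· ∈ L)) W = 0 := by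
      rw [kneser_apply]
      exact sum_eq_zero fun W' hW' => if_neg fun h => hL W hW W' h (mem_filter.1 hW').2
    simp [this]
  · simp [indicatorVec_apply, hW]

variable [Fintype F] [Finite V]

theorem kneser_aboveVec {T : Submodule F V} (hT : Module.finrank F T ≤ d) :
    kneser F V d (aboveVec d T) =
      numExtensions (Fintype.card F) (Module.finrank F V) d d (Module.finrank F T) •
        disjointVec d T := by
  ext W
  have hcount : kneser F V d (aboveVec d T) W = #(extensions d T ⊤ W.1) := by
    simp [kneser_apply, indicatorVec_apply, extensions, filter_filter, and_comm, disjoint_comm]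
  rw [hcount, PiLp.smul_apply, indicatorVec_apply]
  split_ifs with hTW
  · rw [card_extensions le_top le_top hTW hT, finrank_top, W.2, smul_eq_mul, mul_one]
  · have hempty : extensions d T ⊤ W.1 = ∅ := eq_empty_of_forall_notMem fun W' hW' =>
      hTW ((mem_extensions.1 hW').2.2.mono_left (mem_extensions.1 hW').1)
    rw [hempty, card_empty, Nat.cast_zero, smul_zero]

theorem kneser_aboveVec_sub_smul_mem {T : Submodule F V} (hT : Module.finrank F T ≤ d) :
    kneser F V d (aboveVec d T) -
        kneserEigenvalue (Fintype.card F) (Module.finrank F V) d (Module.finrank F T) •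
          aboveVec d T ∈ degreeLT F V d (Module.finrank F T) := by
  have := Fintype.ofFinite (Submodule F V)
  have hdisjoint : disjointVec d T -
      moebius (Fintype.card F) (Module.finrank F T) • aboveVec d T ∈
        degreeLT F V d (Module.finrank F T) := by
    have hTmem : T ∈ ({S | S ≤ T} : Finset (Submodule F V)) := by simp
    rw [disjointVec_eq_sum, ← add_sum_erase _ _ hTmem, add_sub_cancel_left]
    refine Submodule.sum_mem _ fun S hS => Submodule.smul_mem _ _ (aboveVec_mem_degreeLT ?_)
    obtain ⟨hST, hS⟩ := mem_erase.1 hS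
    exact Submodule.finrank_lt_finrank_of_lt (lt_of_le_of_ne (mem_filter.1 hS).2 hST)
  rw [kneser_aboveVec hT, kneserEigenvalue, mul_comm, mul_smul, ← smul_sub]
  exact Submodule.smul_mem _ _ hdisjoint

theorem kneser_sub_smul_mem_degreeLT {j : ℕ} (hj : j ≤ d)
    {f : EuclideanSpace ℝ (SubspaceOfDim F V d)} (hf : f ∈ degreeLT F V d (j + 1)) :
    kneser F V d f - kneserEigenvalue (Fintype.card F) (Module.finrank F V) d j • f ∈
      degreeLT F V d j := by
  set l := kneserEigenvalue (Fintype.card F) (Module.finrank F V) d j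
  suffices h : degreeLT F V d (j + 1) ≤
      (degreeLT F V d j).comap (kneser F V d - l • LinearMap.id) from h hf
  refine Submodule.span_le.2 ?_
  rintro _ ⟨T, hT, rfl⟩
  have hsub := kneser_aboveVec_sub_smul_mem (d := d) (T := T) (by lia)
  rcases (Nat.lt_succ_iff.1 hT).eq_or_lt with hTj | hTj
  · rwa [hTj] at hsub
  · have hTmem : aboveVec d T ∈ degreeLT F V d j := aboveVec_mem_degreeLT hTj
    have hKmem := Submodule.add_mem _ (degreeLT_mono hTj.le hsub) (Submodule.smul_mem _
      (kneserEigenvalue (Fintype.card F) (Module.finrank F V) d (Module.finrank F T)) hTmem)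
    rw [sub_add_cancel] at hKmem
    exact Submodule.sub_mem _ hKmem (Submodule.smul_mem _ l hTmem)

end Kneser

section Bound

theorem kneserEigenvalue_zero (q : ℝ) (N d : ℕ) :
    kneserEigenvalue q N d 0 = numExtensions q N d d 0 := by
  rw [kneserEigenvalue, moebius_zero, one_mul]

theorem kneserEigenvalue_ratio {q : ℝ} (hq : 1 < q) (N : ℕ) {d : ℕ} (hd : 0 < d) :
    (kneserEigenvalue q N d 0 + -kneserEigenvalue q N d 1) * numExtensions q N 0 d 1 =
      -kneserEigenvalue q N d 1 * numExtensions q N 0 d 0 := by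
  have hne : q ^ d - q ^ 0 ≠ 0 := (sub_pos.2 (pow_lt_pow_right₀ hq hd)).ne'
  have h_eigenvalue := kneserEigenvalue_succ_mul (N := N) hq hd
  have h_count := numExtensions_mul hq N 0 hd
  refine mul_right_cancel₀ hne ?_
  simp only [zero_add, pow_zero, one_mul, add_zero] at h_eigenvalue h_count ⊢
  linear_combination kneserEigenvalue q N d 1 * h_count + numExtensions q N 0 d 1 * h_eigenvalue

variable [Fintype F] [Finite V] {d : ℕ}

theorem kneser_aboveVec_bot [Fintype (SubspaceOfDim F V d)] :
    kneser F V d (aboveVec d (⊥ : Submodule F V)) =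
      kneserEigenvalue (Fintype.card F) (Module.finrank F V) d 0 •
        aboveVec d (⊥ : Submodule F V) := by
  rw [kneser_aboveVec (by simp), finrank_bot, kneserEigenvalue_zero]
  simp only [disjointVec, aboveVec, disjoint_bot_left, bot_le]

theorem card_subspaceOfDim [Fintype (SubspaceOfDim F V d)] :
    (Fintype.card (SubspaceOfDim F V d) : ℝ) =
      numExtensions (Fintype.card F) (Module.finrank F V) 0 d 0 := by
  have h := card_extensions (F := F) (V := V) (T := ⊥) (H := ⊤) (A := ⊥) (d := d) bot_le le_top
    disjoint_bot_left (by simp)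
  simpa [extensions, finrank_top] using h

theorem card_le_of_pairwise_not_disjoint (hd : 0 < d) (hdV : 2 * d ≤ Module.finrank F V)
    {L : Finset (SubspaceOfDim F V d)} (hL : ∀ W ∈ L, ∀ W' ∈ L, ¬Disjoint W.1 W'.1) :
    (#L : ℝ) ≤ numExtensions (Fintype.card F) (Module.finrank F V) 0 d 1 ∧
      ((#L : ℝ) = numExtensions (Fintype.card F) (Module.finrank F V) 0 d 1 →
        indicatorVec (· ∈ L) ∈ degreeLT F V d 2) := by
  let _ := Fintype.ofFinite (SubspaceOfDim F V d)
  have hq : (1 : ℝ) < Fintype.card F := by exact_mod_cast Fintype.one_lt_card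
  set l := kneserEigenvalue (Fintype.card F) (Module.finrank F V) d
  have hl0 : 0 ≤ l 0 := by
    simp only [l, kneserEigenvalue_zero]
    exact (numExtensions_pos hq (by lia) 0).le
  have hl1 : l 1 < 0 := kneserEigenvalue_one_neg hq hdV
  have hbound := ratio_bound (S := degreeLT F V d 2) (isSymmetric_kneser (F := F) (V := V) (d := d))
    (neg_nonneg.2 hl1.le) kneser_aboveVec_bot
    (by rw [inner_indicatorVec, inner_indicatorVec]; simp)
    (inner_kneser_indicatorVec_eq_zero hL) (aboveVec_mem_degreeLT (by simp)) fun f hf => by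
      rw [neg_neg]
      refine mul_inner_self_le_inner_map_self isSymmetric_kneser degreeLT_mono
        (fun j hj x => kneser_sub_smul_mem_degreeLT (Nat.lt_succ_iff.1 hj))
        (fun j hj hjd => kneserEigenvalue_one_lt hq hdV hj (Nat.lt_succ_iff.1 hjd))
        (degreeLT_succ_self.ge Submodule.mem_top) ?_
      rwa [degreeLT_one, Submodule.mem_orthogonal_singleton_iff_inner_right]
  have hratio := kneserEigenvalue_ratio hq (Module.finrank F V) hd
  simp only [inner_indicatorVec, and_self, bot_le, filter_true, card_univ, filter_univ_mem,
    card_subspaceOfDim] at hbound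
  refine ⟨le_of_mul_le_mul_left (hbound.1.trans hratio.ge) (by linarith), fun h => hbound.2 ?_⟩
  rw [h, hratio]

end Bound


section PeriodicOff

variable {R M α : Type*} [Ring R] [AddCommGroup M] [Module R M]

/-- The function `w` is constant on each coset of `C` other than `C` itself. -/
def PeriodicOff (C : Submodule R M) (w : M → α) : Prop :=
  ∀ v ∉ C, ∀ u ∈ C, w (v + u) = w v

variable {w : M → α}

theorem PeriodicOff.eq_of_mem_of_notMem {A B : Submodule R M} (hA : PeriodicOff A w)
    (hB : PeriodicOff B w) {a b : M} (haA : a ∈ A) (haB : a ∉ B) (hbB : b ∈ B) (hbA : b ∉ A) :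
    w a = w b := by
  rw [← hB a haB b hbB, add_comm, hA b hbA a haA]

variable {𝓛 : Set (Submodule R M)}

theorem eq_of_mem_of_isAntichain (hanti : IsAntichain (· ≤ ·) 𝓛)
    (hper : ∀ C ∈ 𝓛, PeriodicOff C w) (havoid : ∀ v ≠ 0, ∃ C ∈ 𝓛, v ∉ C)
    {C : Submodule R M} (hC : C ∈ 𝓛) {a c : M} (haC : a ∈ C) (ha : a ≠ 0) (hcC : c ∈ C)
    (hc : c ≠ 0) : w a = w c := by
  have off {C' : Submodule R M} (hC' : C' ∈ 𝓛) {x y : M} (hx : x ∈ C) (hxC' : x ∉ C')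
      (hy : y ∈ C) (hyC' : y ∉ C') : w x = w y := by
    obtain ⟨b, hbC', hbC⟩ := SetLike.not_le_iff_exists.1
      (hanti hC' hC (by rintro rfl; exact hxC' hx))
    exact ((hper C hC).eq_of_mem_of_notMem (hper C' hC') hx hxC' hbC' hbC).trans
      ((hper C hC).eq_of_mem_of_notMem (hper C' hC') hy hyC' hbC' hbC).symm
  obtain ⟨A, hA, haA⟩ := havoid a ha
  obtain ⟨B, hB, hcB⟩ := havoid c hc
  obtain ⟨x, hxC, hx⟩ : ∃ x ∈ C, x ∉ (A ∪ B : Set M) := by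
    by_contra! hcover
    rcases AddSubgroupClass.subset_union.1 hcover with h | h
    · exact haA (h haC)
    · exact hcB (h hcC)
  rw [Set.mem_union, not_or] at hx
  exact (off hA haC haA hxC hx.1).trans (off hB hxC hx.2 hcC hcB)

theorem eq_of_mem_of_mem_of_isAntichain (hanti : IsAntichain (· ≤ ·) 𝓛)
    (hper : ∀ C ∈ 𝓛, PeriodicOff C w) (havoid : ∀ v ≠ 0, ∃ C ∈ 𝓛, v ∉ C)
    {A B : Submodule R M} (hA : A ∈ 𝓛) (hB : B ∈ 𝓛) {a b : M} (haA : a ∈ A) (ha : a ≠ 0)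
    (hbB : b ∈ B) (hb : b ≠ 0) : w a = w b := by
  rcases eq_or_ne A B with rfl | hAB
  · exact eq_of_mem_of_isAntichain hanti hper havoid hA haA ha hbB hb
  obtain ⟨x, hxA, hxB⟩ := SetLike.not_le_iff_exists.1 (hanti hA hB hAB)
  obtain ⟨y, hyB, hyA⟩ := SetLike.not_le_iff_exists.1 (hanti hB hA hAB.symm)
  have hx : x ≠ 0 := fun h => hxB (h ▸ zero_mem B)
  have hy : y ≠ 0 := fun h => hyA (h ▸ zero_mem A)
  calc w a = w x := eq_of_mem_of_isAntichain hanti hper havoid hA haA ha hxA hx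
    _ = w y := (hper A hA).eq_of_mem_of_notMem (hper B hB) hxA hxB hyB hyA
    _ = w b := eq_of_mem_of_isAntichain hanti hper havoid hB hyB hy hbB hb

theorem eq_of_isAntichain_of_sSup_eq_top (hanti : IsAntichain (· ≤ ·) 𝓛)
    (hper : ∀ C ∈ 𝓛, PeriodicOff C w) (havoid : ∀ v ≠ 0, ∃ C ∈ 𝓛, v ∉ C) (hsup : sSup 𝓛 = ⊤)
    {u v : M} (hu : u ≠ 0) (hv : v ≠ 0) : w u = w v := by
  obtain ⟨C, hC, a, haC, ha⟩ : ∃ C ∈ 𝓛, ∃ a ∈ C, a ≠ 0 := by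
    by_contra! h
    have hbot : (⊤ : Submodule R M) ≤ ⊥ := hsup ▸ sSup_le fun C hC x hx => h C hC x hx
    exact hu (hbot Submodule.mem_top)
  have translate (x : M) : ∀ y, (y ≠ 0 → w y = w a) → x + y ≠ 0 → w (x + y) = w a := by
    have hx : x ∈ ⨆ C : 𝓛, C.1 := by
      rw [← sSup_eq_iSup', hsup]
      exact Submodule.mem_top
    induction hx using Submodule.iSup_induction' with
    | mem B x hxB =>
      intro y hy hxy
      by_cases hmem : x + y ∈ B.1
      · exact eq_of_mem_of_mem_of_isAntichain hanti hper havoid B.2 hC hmem hxy haC ha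
      · have hyB : y ∉ B.1 := fun h => hmem (add_mem hxB h)
        rw [add_comm, hper B B.2 y hyB x hxB]
        exact hy fun h => hyB (h ▸ zero_mem _)
    | zero => simp only [zero_add, imp_self, implies_true]
    | add x x' _ _ hx hx' =>
      intro y hy
      rw [add_assoc]
      exact hx _ (hx' y hy)
  have eq_const (x : M) (hx : x ≠ 0) : w x = w a := by
    simpa only [add_zero] using translate x 0 (by simp) (by rwa [add_zero])
  rw [eq_const u hu, eq_const v hv]

end PeriodicOff

section Weight

theorem span_singleton_add_sup {A : Submodule F V} (v : V) {u : V} (hu : u ∈ A) :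
    (F ∙ (v + u)) ⊔ A = (F ∙ v) ⊔ A := by
  have hle {x y : V} (h : x - y ∈ A) : (F ∙ x) ⊔ A ≤ (F ∙ y) ⊔ A := by
    refine sup_le ?_ le_sup_right
    rw [Submodule.span_singleton_le_iff_mem, ← add_sub_cancel y x]
    exact Submodule.add_mem_sup (Submodule.mem_span_singleton_self y) h
  exact le_antisymm (hle (by simpa using hu)) (hle (by simpa using hu))

variable [Fintype V] {d : ℕ}

theorem exists_weight_of_mem_degreeLT_two {f : EuclideanSpace ℝ (SubspaceOfDim F V d)}
    (hf : f ∈ degreeLT F V d 2) :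
    ∃ w : V → ℝ, (∀ r : F, r ≠ 0 → ∀ v, w (r • v) = w v) ∧ ∀ W, f W = ∑ v with v ∈ W.1, w v := by
  induction hf using Submodule.span_induction with
  | mem f hf =>
    obtain ⟨T, hT, rfl⟩ := hf
    have hprincipal := (Submodule.finrank_le_one_iff_isPrincipal T).1 (Nat.lt_succ_iff.1 hT)
    obtain ⟨t, rfl⟩ := hprincipal.principal
    set G : Finset V := {v | F ∙ v = F ∙ t}
    have hG : (#G : ℝ) ≠ 0 := by
      have ht : t ∈ G := by simp [G]
      exact_mod_cast (card_pos.2 ⟨t, ht⟩).ne'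
    refine ⟨fun v => if F ∙ v = F ∙ t then (#G : ℝ)⁻¹ else 0, fun r hr v => ?_, fun W => ?_⟩
    · simp only [Submodule.span_singleton_smul_eq hr.isUnit]
    · have hsum : ∑ v with v ∈ W.1, (if F ∙ v = F ∙ t then (#G : ℝ)⁻¹ else 0) =
          ∑ _v ∈ G, if F ∙ t ≤ W.1 then (#G : ℝ)⁻¹ else 0 := by
        simp only [G, sum_filter]
        refine sum_congr rfl fun v _ => ?_
        by_cases h : F ∙ v = F ∙ t
        · rw [if_pos h, if_pos h, ← h, Submodule.span_singleton_le_iff_mem]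
        · rw [if_neg h, if_neg h, ite_self]
      rw [hsum, sum_const, nsmul_eq_mul, mul_ite, mul_zero, mul_inv_cancel₀ hG,
        indicatorVec_apply]
  | zero => exact ⟨0, fun _ _ _ => rfl, fun W => by simp⟩
  | add f g _ _ hf hg =>
    obtain ⟨w, hw, hfw⟩ := hf
    obtain ⟨z, hz, hgz⟩ := hg
    refine ⟨w + z, fun r hr v => ?_, fun W => ?_⟩
    · rw [Pi.add_apply, Pi.add_apply, hw r hr, hz r hr]
    · simp only [PiLp.add_apply, Pi.add_apply, hfw, hgz, sum_add_distrib]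
  | smul c f _ hf =>
    obtain ⟨w, hw, hfw⟩ := hf
    refine ⟨c • w, fun r hr v => ?_, fun W => ?_⟩
    · rw [Pi.smul_apply, Pi.smul_apply, hw r hr]
    · simp only [PiLp.smul_apply, Pi.smul_apply, hfw, smul_sum]

theorem sum_span_singleton [Fintype F] {w : V → ℝ}
    (hw : ∀ r : F, r ≠ 0 → ∀ v, w (r • v) = w v) {v : V} (hv : v ≠ 0) :
    ∑ x with x ∈ F ∙ v, w x = w 0 + (Fintype.card F - 1) * w v := by
  have himage : ({x | x ∈ F ∙ v} : Finset V) = univ.image fun r : F => r • v := by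
    ext x
    simp [Submodule.mem_span_singleton]
  have hconst : ∀ r ∈ univ.erase (0 : F), w (r • v) = w v := fun r hr =>
    hw r (ne_of_mem_erase hr) v
  rw [himage, sum_image (smul_left_injective F hv).injOn, ← add_sum_erase _ _ (mem_univ 0),
    zero_smul, sum_congr rfl hconst, sum_const, card_erase_of_mem (mem_univ _), card_univ,
    nsmul_eq_mul, Nat.cast_sub Fintype.card_pos, Nat.cast_one]

theorem sum_weight_eq_of_finrank_eq {w : V → ℝ} (hw : ∀ u v, u ≠ 0 → v ≠ 0 → w u = w v)
    {A B : Submodule F V} (h : Module.finrank F A = Module.finrank F B) :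
    ∑ v with v ∈ A, w v = ∑ v with v ∈ B, w v := by
  let e := LinearEquiv.ofFinrankEq A B h
  rw [sum_subtype (p := (· ∈ A)) _ (by simp) w, sum_subtype (p := (· ∈ B)) _ (by simp) w]
  refine Fintype.sum_equiv e.toEquiv _ _ fun v => ?_
  rcases eq_or_ne v 0 with rfl | hv
  · simp
  · exact hw _ _ (by simpa using hv) (by simpa using hv)

theorem sum_extensions_sum_weight [Fintype (SubspaceOfDim F V d)] (T H A : Submodule F V)
    (w : V → ℝ) :
    ∑ B ∈ extensions d T H A, ∑ x with x ∈ B.1, w x =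
      ∑ x, #(extensions d (T ⊔ F ∙ x) H A) * w x := by
  simp only [sum_filter]
  rw [sum_comm]
  refine sum_congr rfl fun x _ => ?_
  rw [← sum_filter, sum_const, nsmul_eq_mul]
  congr 3
  ext B
  simp only [mem_filter, mem_extensions, sup_le_iff, Submodule.span_singleton_le_iff_mem]
  tauto

theorem sum_card_extensions_mul_weight [Fintype (SubspaceOfDim F V d)] (T H A : Submodule F V)
    (w : V → ℝ) :
    ∑ x with x ∈ T ⊔ A, #(extensions d (T ⊔ F ∙ x) H A) * w x =
      #(extensions d T H A) * ∑ x with x ∈ T, w x := by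
  rw [mul_sum, ← sum_subset (monotone_filter_right _ fun x _ => @le_sup_left _ _ T A x)]
  · refine sum_congr rfl fun x hx => ?_
    rw [sup_eq_left.2]
    simpa using hx
  · intro x hxTA hxT
    have empty : extensions d (T ⊔ F ∙ x) H A = ∅ := by
      refine eq_empty_of_forall_notMem fun B hB => ?_
      simp only [mem_extensions, sup_le_iff, Submodule.span_singleton_le_iff_mem] at hB
      obtain ⟨⟨hTB, hxB⟩, -, hBA⟩ := hB
      simp only [mem_filter, mem_univ, true_and] at hxTA hxT
      exact hxT ((mem_sup_iff_of_disjoint hTB hBA hxB).1 hxTA)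
    rw [empty, card_empty, Nat.cast_zero, zero_mul]

theorem periodicOff_of_sum_eq_zero [Finite F] {w : V → ℝ}
    (hw : ∀ r : F, r ≠ 0 → ∀ v, w (r • v) = w v) (hd : 0 < d) {A : Submodule F V}
    (hA : Module.finrank F A + d ≤ Module.finrank F V)
    (hsum : ∀ B : SubspaceOfDim F V d, Disjoint B.1 A → ∑ v with v ∈ B.1, w v = 0) :
    PeriodicOff A w := by
  let _ := Fintype.ofFinite F
  let _ := Fintype.ofFinite (SubspaceOfDim F V d)
  intro v hv u hu
  have hq : (1 : ℝ) < Fintype.card F := by exact_mod_cast Fintype.one_lt_card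
  have hvu : v + u ∉ A := fun h => hv ((Submodule.add_mem_iff_left A hu).1 h)
  have ne_zero {y : V} (hy : y ∉ A) : y ≠ 0 := fun h => hy (h ▸ zero_mem A)
  have disj {y : V} (hy : y ∉ A) : Disjoint (F ∙ y) A :=
    ((Submodule.disjoint_span_singleton' (ne_zero hy)).2 hy).symm
  have hsup : (F ∙ (v + u)) ⊔ A = (F ∙ v) ⊔ A := span_singleton_add_sup v hu
  have balance {y : V} (hy : y ∉ A) :
      #(extensions d (F ∙ y) ⊤ A) * (w 0 + (Fintype.card F - 1) * w y) +
        ∑ x with x ∉ (F ∙ y) ⊔ A, #(extensions d ((F ∙ y) ⊔ F ∙ x) ⊤ A) * w x = 0 := by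
    rw [← sum_span_singleton hw (ne_zero hy), ← sum_card_extensions_mul_weight,
      sum_filter_add_sum_filter_not, ← sum_extensions_sum_weight]
    exact sum_eq_zero fun B hB => hsum B (mem_extensions.1 hB).2.2
  have card_line : #(extensions d (F ∙ (v + u)) ⊤ A) = #(extensions d (F ∙ v) ⊤ A) :=
    card_extensions_eq_of_finrank_eq le_top le_top le_top (disj hvu) (disj hv) (by
      rw [finrank_span_singleton (ne_zero hvu), finrank_span_singleton (ne_zero hv)])
  have card_plane : ∀ x ∈ ({x | x ∉ (F ∙ v) ⊔ A} : Finset V),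
      #(extensions d ((F ∙ (v + u)) ⊔ F ∙ x) ⊤ A) * w x =
        #(extensions d ((F ∙ v) ⊔ F ∙ x) ⊤ A) * w x := by
    intro x hx
    replace hx : x ∉ (F ∙ v) ⊔ A := by simpa using hx
    have hxu : x ∉ (F ∙ (v + u)) ⊔ A := hsup ▸ hx
    rw [card_extensions_eq_of_finrank_eq le_top le_top le_top
      (disjoint_sup_span_singleton (disj hvu) hxu) (disjoint_sup_span_singleton (disj hv) hx)]
    rw [Submodule.finrank_sup_span_singleton fun h => hxu (Submodule.mem_sup_left h),
      Submodule.finrank_sup_span_singleton fun h => hx (Submodule.mem_sup_left h),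
      finrank_span_singleton (ne_zero hvu), finrank_span_singleton (ne_zero hv)]
  have hpos : (0 : ℝ) < #(extensions d (F ∙ v) ⊤ A) := by
    rw [card_extensions le_top le_top (disj hv) (by rwa [finrank_span_singleton (ne_zero hv)]),
      finrank_top]
    exact numExtensions_pos hq hA _
  have hvu_balance := balance hvu
  rw [hsup, sum_congr rfl card_plane, card_line] at hvu_balance
  have hmul := mul_left_cancel₀ hpos.ne' (add_right_cancel (hvu_balance.trans (balance hv).symm))
  exact mul_left_cancel₀ (sub_pos.2 hq).ne' (add_left_cancel hmul)

end Weight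

section UpperShadow

variable [FiniteDimensional F V] {d : ℕ} {L : Finset (SubspaceOfDim F V d)}

theorem exists_le_notMem_finrank_eq {C : Submodule F V} {v : V} (hv : v ∉ C) {m : ℕ}
    (hCm : Module.finrank F C ≤ m) (hm : m < Module.finrank F V) :
    ∃ A, C ≤ A ∧ v ∉ A ∧ Module.finrank F A = m := by
  obtain ⟨f, hfv, hCf⟩ := Submodule.exists_le_ker_of_notMem hv
  have hf : f ≠ 0 := fun h => hfv (by rw [h, LinearMap.zero_apply])
  have hker := Module.Dual.finrank_ker_add_one_of_ne_zero hf
  obtain ⟨A, hCA, hAf, hA⟩ := exists_between_finrank_eq hCf hCm (by lia)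
  exact ⟨A, hCA, fun h => hfv (hAf h), hA⟩

theorem exists_subspaceOfDim_disjoint {A : Submodule F V}
    (hA : Module.finrank F A + d ≤ Module.finrank F V) :
    ∃ B : SubspaceOfDim F V d, Disjoint B.1 A := by
  obtain ⟨A', hA'⟩ := Submodule.exists_isCompl A
  have hdim := Submodule.finrank_add_eq_of_isCompl hA'
  obtain ⟨B, -, hB, hBd⟩ := exists_between_finrank_eq (bot_le (a := A')) (m := d) (by simp)
    (by lia)
  exact ⟨⟨B, hBd⟩, hA'.symm.disjoint.mono_left hB⟩

/-- The subspaces of dimension complementary to `d` that contain a member of `L`; they are the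
subspaces off which a weight representing the indicator of `L` is shown to be periodic. -/
def upperShadow (L : Finset (SubspaceOfDim F V d)) : Set (Submodule F V) :=
  {A | Module.finrank F A + d = Module.finrank F V ∧ ∃ C ∈ L, C.1 ≤ A}

theorem isAntichain_upperShadow : IsAntichain (· ≤ ·) (upperShadow L) :=
  fun _ hA _ hB hAB hle => hAB (Submodule.eq_of_le_of_finrank_eq hle
    (Nat.add_right_cancel (hA.1.trans hB.1.symm)))

theorem exists_mem_upperShadow_notMem (hd : 0 < d) (hdV : 2 * d ≤ Module.finrank F V)
    {C : SubspaceOfDim F V d} (hC : C ∈ L) {v : V} (hv : v ∉ C.1) :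
    ∃ A ∈ upperShadow L, v ∉ A := by
  have hCd := C.2
  obtain ⟨A, hCA, hvA, hA⟩ := exists_le_notMem_finrank_eq hv
    (m := Module.finrank F V - d) (by lia) (by lia)
  exact ⟨A, ⟨by lia, C, hC, hCA⟩, hvA⟩

theorem sSup_upperShadow_eq_top (hL : L.Nonempty) (hdV : 2 * d < Module.finrank F V) :
    sSup (upperShadow L) = ⊤ := by
  obtain ⟨C, hC⟩ := hL
  refine eq_top_iff.2 fun v _ => ?_
  have hdim : Module.finrank F ↥(C.1 ⊔ F ∙ v) ≤ d + 1 := by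
    refine (Submodule.finrank_add_le_finrank_add_finrank _ _).trans ?_
    rw [C.2]
    exact Nat.add_le_add_left (finrank_span_le_card {v} |>.trans (by simp)) d
  obtain ⟨A, hCA, -, hA⟩ := exists_between_finrank_eq (le_top (a := C.1 ⊔ F ∙ v))
    (m := Module.finrank F V - d) (by lia) (by rw [finrank_top]; lia)
  have hA' : A ∈ upperShadow L := ⟨by lia, C, hC, le_sup_left.trans hCA⟩
  exact le_sSup hA' (hCA (Submodule.mem_sup_right (Submodule.mem_span_singleton_self v)))

end UpperShadow

theorem exists_common_vector_or_le_of_sum_weight [Finite F] [Fintype V] {d : ℕ} (hd : 0 < d)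
    (hdV : 2 * d ≤ Module.finrank F V) {L : Finset (SubspaceOfDim F V d)} (hne : L.Nonempty)
    (hL : ∀ W ∈ L, ∀ W' ∈ L, ¬Disjoint W.1 W'.1) {w : V → ℝ}
    (hw : ∀ r : F, r ≠ 0 → ∀ v, w (r • v) = w v)
    (hsum : ∀ W : SubspaceOfDim F V d, ∑ v with v ∈ W.1, w v = if W ∈ L then 1 else 0) :
    (∃ v ≠ 0, ∀ W ∈ L, v ∈ W.1) ∨
      (Module.finrank F V = 2 * d ∧ ∃ U ≠ ⊤, ∀ W ∈ L, W.1 ≤ U) := by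
  by_contra! ⟨hvector, hspan⟩
  have havoid (v : V) (hv : v ≠ 0) : ∃ A ∈ upperShadow L, v ∉ A := by
    obtain ⟨C, hC, hvC⟩ := hvector v hv
    exact exists_mem_upperShadow_notMem hd hdV hC hvC
  have hsup : sSup (upperShadow L) = ⊤ := by
    rcases hdV.lt_or_eq with hlt | heq
    · exact sSup_upperShadow_eq_top hne hlt
    · by_contra htop
      obtain ⟨W, hW, hWU⟩ := hspan heq.symm _ htop
      exact hWU (le_sSup ⟨by rw [W.2]; lia, W, hW, le_rfl⟩)
  have hper : ∀ A ∈ upperShadow L, PeriodicOff A w := by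
    rintro A ⟨hA, C, hC, hCA⟩
    refine periodicOff_of_sum_eq_zero hw hd hA.le fun B hBA => ?_
    rw [hsum, if_neg fun hB => hL B hB C hC (hBA.mono_right hCA)]
  have hconst (u v : V) (hu : u ≠ 0) (hv : v ≠ 0) : w u = w v :=
    eq_of_isAntichain_of_sSup_eq_top isAntichain_upperShadow hper havoid hsup hu hv
  obtain ⟨C, hC⟩ := hne
  obtain ⟨B, hBC⟩ := exists_subspaceOfDim_disjoint (A := C.1) (d := d) (by rw [C.2]; lia)
  have hB : B ∉ L := fun hB => hL B hB C hC hBC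
  have hBC_sum := sum_weight_eq_of_finrank_eq hconst (B.2.trans C.2.symm)
  rw [hsum, hsum, if_neg hB, if_pos hC] at hBC_sum
  exact zero_ne_one hBC_sum

section Projective

variable [Fintype F] [Finite V] {n k : ℕ} [Fintype (SubspaceOfDim F V (k + 1))]

theorem numExtensions_one_eq_gbinom {q : ℕ} (hq : 1 < q) (n k : ℕ) :
    numExtensions q (n + 1) 0 (k + 1) 1 = gbinom q n k := by
  rw [← numExtensions_zero_eq_gbinom hq, numExtensions_succ_succ (by positivity)]

theorem card_subspaces_ge (hV : Module.finrank F V = n + 1) {P : Submodule F V}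
    (hP : Module.finrank F P = 1) :
    #{W : SubspaceOfDim F V (k + 1) | P ≤ W.1} = gbinom (Fintype.card F) n k := by
  have h := card_extensions (d := k + 1) (T := P) (H := ⊤) (A := ⊥) le_top le_top
    disjoint_bot_right (by lia)
  rw [hP, finrank_top, finrank_bot, hV, numExtensions_one_eq_gbinom Fintype.one_lt_card] at h
  simp only [extensions, le_top, disjoint_bot_right, and_true] at h
  exact_mod_cast h

theorem card_subspaces_le {H : Submodule F V} (hH : Module.finrank F H = 2 * k + 1) :
    #{W : SubspaceOfDim F V (k + 1) | W.1 ≤ H} = gbinom (Fintype.card F) (2 * k + 1) k := by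
  have h := card_extensions (d := k + 1) (T := ⊥) (H := H) (A := ⊥) bot_le bot_le
    disjoint_bot_right (by simp)
  rw [hH, finrank_bot, numExtensions_zero_eq_gbinom Fintype.one_lt_card,
    gbinom_two_mul_add_one_succ Fintype.one_lt_card] at h
  simp only [extensions, bot_le, disjoint_bot_right, true_and, and_true] at h
  exact_mod_cast h

theorem eq_filter_ge_or_eq_filter_le_of_card_eq (hV : Module.finrank F V = n + 1)
    (hn : 2 * k + 1 ≤ n) {L : Finset (SubspaceOfDim F V (k + 1))}
    (hL : ∀ W ∈ L, ∀ W' ∈ L, ¬Disjoint W.1 W'.1)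
    (hcard : #L = gbinom (Fintype.card F) n k) :
    (∃ P : Submodule F V, Module.finrank F P = 1 ∧ L = univ.filter fun W => P ≤ W.1) ∨
      (n = 2 * k + 1 ∧ ∃ H : Submodule F V, Module.finrank F H = n ∧
        L = univ.filter fun W => W.1 ≤ H) := by
  have hq := Fintype.one_lt_card (α := F)
  have hdV : 2 * (k + 1) ≤ Module.finrank F V := by lia
  have hcount : (#L : ℝ) = numExtensions (Fintype.card F) (Module.finrank F V) 0 (k + 1) 1 := by
    rw [hV, numExtensions_one_eq_gbinom hq, hcard]
  let _ := Fintype.ofFinite V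
  have hne : L.Nonempty := by
    have hpos := numExtensions_pos (q := Fintype.card F) (by exact_mod_cast hq)
      (by lia : 0 + (k + 1) ≤ Module.finrank F V) 1
    rw [← hcount] at hpos
    exact card_pos.1 (by exact_mod_cast hpos)
  obtain ⟨w, hw, hsum⟩ := exists_weight_of_mem_degreeLT_two
    ((card_le_of_pairwise_not_disjoint k.succ_pos hdV hL).2 hcount)
  have hsum_ite (W : SubspaceOfDim F V (k + 1)) :
      ∑ v with v ∈ W.1, w v = if W ∈ L then 1 else 0 := by
    rw [← hsum W, indicatorVec_apply]
    congr
  rcases exists_common_vector_or_le_of_sum_weight k.succ_pos hdV hne hL hw hsum_ite with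
    ⟨v, hv, hLv⟩ | ⟨hV', U, hU, hLU⟩
  · have hP : Module.finrank F (F ∙ v) = 1 := finrank_span_singleton hv
    refine Or.inl ⟨F ∙ v, hP, eq_of_subset_of_card_le (fun W hW => ?_) ?_⟩
    · simpa using hLv W hW
    · rw [card_subspaces_ge hV hP, hcard]
  · obtain rfl : n = 2 * k + 1 := by lia
    obtain ⟨H, hUH, -, hH⟩ := exists_between_finrank_eq (le_top (a := U)) (m := 2 * k + 1)
      (by have := Submodule.finrank_lt hU; lia) (by rw [finrank_top]; lia)
    refine Or.inr ⟨rfl, H, hH, eq_of_subset_of_card_le (fun W hW => ?_) ?_⟩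
    · simpa using (hLU W hW).trans hUH
    · rw [card_subspaces_le hH, hcard]

end Projective

end ErdosKoRado

open ErdosKoRado in
theorem stmt18_general {F V : Type*} [Field F] [Fintype F] [AddCommGroup V] [Module F V]
    {n k : ℕ} (hV : Module.finrank F V = n + 1) (hn : 2 * k + 1 ≤ n)
    [Fintype (SubspaceOfDim F V (k + 1))] (L : Finset (SubspaceOfDim F V (k + 1)))
    (hint : ∀ W ∈ L, ∀ W' ∈ L, W.1 ⊓ W'.1 ≠ ⊥) :
    #L ≤ gbinom (Fintype.card F) n k ∧
    (#L = gbinom (Fintype.card F) n k ↔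
      ((∃ P : Submodule F V, Module.finrank F P = 1 ∧ L = univ.filter fun W => P ≤ W.1) ∨
       (n = 2 * k + 1 ∧ ∃ H : Submodule F V, Module.finrank F H = n ∧
        L = univ.filter fun W => W.1 ≤ H))) := by
  have : FiniteDimensional F V := .of_finrank_pos (by lia)
  have : Finite V := Module.finite_of_finite F
  have hL : ∀ W ∈ L, ∀ W' ∈ L, ¬Disjoint W.1 W'.1 := fun W hW W' hW' =>
    disjoint_iff.not.2 (hint W hW W' hW')
  refine ⟨?_, eq_filter_ge_or_eq_filter_le_of_card_eq hV hn hL, ?_⟩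
  · have hle := (card_le_of_pairwise_not_disjoint k.succ_pos (by lia) hL).1
    rw [hV, numExtensions_one_eq_gbinom Fintype.one_lt_card] at hle
    exact_mod_cast hle
  · rintro (⟨P, hP, rfl⟩ | ⟨rfl, H, hH, rfl⟩)
    · exact card_subspaces_ge hV hP
    · exact card_subspaces_le hH

/-- Erdős–Ko–Rado for projective spaces: a pairwise intersecting family of
$k$-subspaces of $\mathrm{PG}(n,q)$, $n \ge 2k+1$, has size at most $\binom{n}{k}_q$,
with equality iff it is a point-pencil, or $n = 2k+1$ and it is the family of all
$k$-subspaces in a fixed hyperplane. -/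
theorem stmt18 (q n k : ℕ) (F : Type) [Field F] [Fintype F]
    (hq : Fintype.card F = q) (hn : 2*k + 1 ≤ n)
    [Fintype {W : Submodule F (Fin (n+1) → F) // Module.finrank F W = k + 1}]
    (L : Finset {W : Submodule F (Fin (n+1) → F) // Module.finrank F W = k + 1})
    (hint : ∀ W ∈ L, ∀ W' ∈ L, W.1 ⊓ W'.1 ≠ ⊥) :
    L.card ≤ gbinom q n k ∧
    (L.card = gbinom q n k ↔
      ((∃ P : Submodule F (Fin (n+1) → F), Module.finrank F P = 1 ∧
          L = Finset.univ.filter fun W => P ≤ W.1) ∨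
       (n = 2*k + 1 ∧ ∃ H : Submodule F (Fin (n+1) → F), Module.finrank F H = n ∧
          L = Finset.univ.filter fun W => W.1 ≤ H))) := by
  subst hq
  exact stmt18_general (by simp) hn L hint
end

section
/- Let $\mathcal{L}$ be a Cameron-Liebler set of $k$-spaces in $\mathrm{PG}(n,q)$, $n \geq 2k+1$, with parameter $x = 1$ (defined via the disjointness-counting property). Then any two elements of $\mathcal{L}$ intersect nontrivially; consequently, $\mathcal{L}$ is either the set of all $k$-subspaces through a fixed point, or $n = 2k+1$ and $\mathcal{L}$ is the set of all $k$-subspaces in a fixed hyperplane. -/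
open Finset
open scoped Classical

/-- `L` is a Cameron-Liebler set of `k`-spaces of `PG(n,q)` with parameter `x`:
it has size `x * [n choose k]_q` and for every `k`-subspace `π` the number of
elements of `L` disjoint from `π` is `(x - χ(π)) * [n-k-1 choose k]_q * q^(k²+k)`. -/
def IsCameronLiebler (q n k : ℕ) (F : Type) [Field F] [Fintype F]
    [Fintype {W : Submodule F (Fin (n+1) → F) // Module.finrank F W = k + 1}]
    (L : Finset {W : Submodule F (Fin (n+1) → F) // Module.finrank F W = k + 1})
    (x : ℝ) : Prop :=
  (L.card : ℝ) = x * gbinom q n k ∧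
  ∀ π : {W : Submodule F (Fin (n+1) → F) // Module.finrank F W = k + 1},
    (((L.filter fun W => W.1 ⊓ π.1 = ⊥).card : ℝ))
      = (x - (if π ∈ L then 1 else 0)) * ((gbinom q (n - k - 1) k : ℝ) * (q : ℝ)^(k^2 + k))

/-!
Let `m = k + 1`, and let `c` be the number of `m`-spaces which contain a fixed point and are
disjoint from a fixed `m`-space avoiding that point. With parameter one, the indicator `f` of `L`
satisfies
`∑_{U disjoint from W} f U + c * f W = c` for every `W`. For every `h : V → ℝ`, the function
`W ↦ ∑ v ∈ W, h v` satisfies an equation of the same shape, with another constant on the right. One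
can choose `h`, invariant under scalars, such that both functions have the same sum over the
`m`-spaces through each point. The operator on the left sends their difference to a constant, and
the sums of this difference through points vanish; these two properties force it to be zero, so
`f W = ∑ v ∈ W, h v`.

The elements of `L` meet pairwise, hence `h` has sum zero over every `m`-space disjoint from a given
`W ∈ L`, and therefore `h` is constant on `(W + ⟨p⟩) \ W` for each `p ∉ W`. Exchanging the part of
`W` outside a hyperplane `A` of `W` for a point `p ∉ W` changes the sum of `h` to
`∑ v ∈ A, h v + (q ^ m - q ^ (m - 1)) * h p`, which is zero or one. If `h` takes two values outside
`W`, this determines `∑ v ∈ A, h v` independently of `A`, and so `h` is constant on `W \ {0}`.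
If `h` is constant outside each `W ∈ L`, then the elements of `L` share a point; otherwise it is
constant on `W \ {0}` for each `W ∈ L`, and the union of `L` is a proper subspace.
-/

section GaussianBinomial

theorem gbinom_zero_right (q a : ℕ) : gbinom q a 0 = 1 := by
  cases a <;> rfl

theorem gbinom_succ_mul {R : Type*} [CommRing R] (q a b : ℕ) :
    ((q : R) ^ (b + 1) - 1) * gbinom q (a + 1) (b + 1) =
      ((q : R) ^ (a + 1) - 1) * gbinom q a b := by
  induction a generalizing b with
  | zero => cases b <;> simp [gbinom]
  | succ a ih =>
    have pascal (c d : ℕ) : (gbinom q (c + 1) (d + 1) : R) =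
        gbinom q c d + (q : R) ^ (d + 1) * gbinom q c (d + 1) := by
      simp only [gbinom, Nat.cast_add, Nat.cast_mul, Nat.cast_pow]
    rw [pascal (a + 1) b]
    cases b with
    | zero =>
      have h := ih 0
      simp only [gbinom_zero_right, Nat.cast_one] at h ⊢
      linear_combination (q : R) * h
    | succ b =>
      linear_combination (q : R) ^ (b + 2) * ih (b + 1) + (q : R) * ih b -
        (q : R) * ((q : R) ^ (a + 1) - 1) * pascal a b

theorem gbinom_le_add (q a b d : ℕ) : gbinom q a b ≤ gbinom q (a + d) (b + d) := by
  induction d with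
  | zero => exact le_rfl
  | succ d ih => exact ih.trans (Nat.le_add_right _ _)

theorem gbinom_pos (q : ℕ) {a b : ℕ} (h : b ≤ a) : 0 < gbinom q a b := by
  have := gbinom_le_add q (a - b) 0 b
  rwa [gbinom_zero_right, zero_add, Nat.sub_add_cancel h] at this

theorem gbinom_lt_succ_succ {q a b : ℕ} (hq : 0 < q) (h : b < a) :
    gbinom q a b < gbinom q (a + 1) (b + 1) :=
  Nat.lt_add_of_pos_right (Nat.mul_pos (Nat.pow_pos hq) (gbinom_pos q h))

/-- The number of `m`-dimensional subspaces of a `(u + m + e)`-dimensional space over a field with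
`q` elements which contain a fixed `i`-dimensional subspace and are disjoint from a fixed
`u`-dimensional one, the two being disjoint. -/
def extensionCount (q u e m i : ℕ) : ℕ :=
  if i ≤ m then q ^ (u * (m - i)) * gbinom q (e + (m - i)) (m - i) else 0

theorem extensionCount_add (q u e i t : ℕ) :
    extensionCount q u e (i + t) i = q ^ (u * t) * gbinom q (e + t) t := by
  simp [extensionCount]

theorem extensionCount_of_lt (q u e : ℕ) {m i : ℕ} (h : m < i) : extensionCount q u e m i = 0 :=
  if_neg h.not_ge

theorem extensionCount_pos {q m i : ℕ} (u e : ℕ) (hq : 0 < q) (h : i ≤ m) :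
    0 < extensionCount q u e m i := by
  obtain ⟨t, rfl⟩ := Nat.exists_eq_add_of_le h
  rw [extensionCount_add]
  exact Nat.mul_pos (Nat.pow_pos hq) (gbinom_pos q (Nat.le_add_left t e))

theorem pow_sub_pow_mul_extensionCount (q u e : ℕ) {m i : ℕ} (h : i < m) :
    ((q : ℝ) ^ m - (q : ℝ) ^ i) * extensionCount q u e m i =
      ((q : ℝ) ^ (u + m + e) - (q : ℝ) ^ (i + u)) * extensionCount q u e m (i + 1) := by
  obtain ⟨t, rfl⟩ := Nat.exists_eq_add_of_lt h
  rw [add_right_comm i t 1, extensionCount_add, add_right_comm i 1 t, add_assoc i t 1,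
    extensionCount_add]
  push_cast
  linear_combination (q : ℝ) ^ (i + u * t + u) * gbinom_succ_mul (R := ℝ) q (e + t) t

theorem extensionCount_two_mul_pow_lt {q m e : ℕ} (u : ℕ) (hq : 0 < q) (hm : 1 ≤ m) (he : 1 ≤ e) :
    extensionCount q u e m 2 * q ^ u < extensionCount q u e m 1 := by
  obtain rfl | hm2 := hm.eq_or_lt
  · rw [extensionCount_of_lt q u e one_lt_two, zero_mul]
    exact extensionCount_pos u e hq le_rfl
  obtain ⟨t, rfl⟩ := Nat.exists_eq_add_of_le hm2
  rw [extensionCount_add, add_assoc 1 1 t, extensionCount_add]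
  calc q ^ (u * t) * gbinom q (e + t) t * q ^ u
      = q ^ (u * (1 + t)) * gbinom q (e + t) t := by ring
    _ < q ^ (u * (1 + t)) * gbinom q (e + (1 + t)) (1 + t) := by
      gcongr
      rw [add_comm 1 t, ← add_assoc]
      exact gbinom_lt_succ_succ hq (by omega)

theorem extensionCount_two_lt_one {q m e : ℕ} (hq : 0 < q) (hm : 1 ≤ m) (he : 1 ≤ e) :
    extensionCount q 0 e m 2 < extensionCount q 0 e m 1 := by
  simpa only [pow_zero, mul_one] using extensionCount_two_mul_pow_lt 0 hq hm he

theorem extensionCount_mul_pow_choose_two_lt {q m i : ℕ} (e : ℕ) (hq : 1 < q) (h2 : 2 ≤ i)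
    (him : i ≤ m) :
    extensionCount q m e m i * q ^ i.choose 2 < extensionCount q m e m 1 := by
  obtain ⟨j, rfl⟩ := Nat.exists_eq_add_of_le' (one_le_two.trans h2)
  obtain ⟨t, rfl⟩ := Nat.exists_eq_add_of_le him
  have hexp : (j + 1 + t) * t + (j + 1).choose 2 < (j + 1 + t) * (t + j) := by
    have h : (j + 1).choose 2 ≤ (j + 1) * j / 2 := by rw [Nat.choose_two_right]; rfl
    have : (j + 1) * j / 2 < (j + 1) * j :=
      Nat.div_lt_self (Nat.mul_pos j.succ_pos (by omega)) one_lt_two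
    nlinarith
  rw [extensionCount_add, show j + 1 + t = 1 + (t + j) by ring, extensionCount_add,
    show 1 + (t + j) = j + 1 + t by ring]
  calc q ^ ((j + 1 + t) * t) * gbinom q (e + t) t * q ^ (j + 1).choose 2
      = q ^ ((j + 1 + t) * t + (j + 1).choose 2) * gbinom q (e + t) t := by ring
    _ ≤ q ^ ((j + 1 + t) * t + (j + 1).choose 2) * gbinom q (e + (t + j)) (t + j) := by
      gcongr
      rw [← add_assoc]
      exact gbinom_le_add q (e + t) t j
    _ < q ^ ((j + 1 + t) * (t + j)) * gbinom q (e + (t + j)) (t + j) := by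
      gcongr
      exact gbinom_pos q (Nat.le_add_left _ _)

end GaussianBinomial

theorem sup_inf_eq_left_of_le_of_disjoint {α : Type*} [Lattice α] [IsModularLattice α] [OrderBot α]
    {a b c : α} (hac : a ≤ c) (hcb : Disjoint c b) : (a ⊔ b) ⊓ c = a := by
  rw [sup_inf_assoc_of_le b hac, hcb.symm.eq_bot, sup_bot_eq]

section LinearAlgebra

open Module (finrank)
open Submodule (span)

variable {F V : Type*} [Field F] [AddCommGroup V] [Module F V]

theorem sup_span_singleton_eq_of_mem {W : Submodule F V} {p v : V} (hv : v ∈ W ⊔ span F {p})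
    (hvW : v ∉ W) : W ⊔ span F {v} = W ⊔ span F {p} := by
  have hp : p ∉ W := fun hp ↦ hvW <| by
    rwa [sup_eq_left.2 ((Submodule.span_singleton_le_iff_mem p W).2 hp)] at hv
  have hcov : W ⋖ W ⊔ span F {p} := by
    rw [sup_comm]; exact Submodule.covBy_span_singleton_sup hp
  have hle : W ⊔ span F {v} ≤ W ⊔ span F {p} :=
    sup_le le_sup_left ((Submodule.span_singleton_le_iff_mem v _).2 hv)
  exact (hcov.eq_or_eq le_sup_left hle).resolve_left fun h ↦
    hvW (h ▸ Submodule.mem_sup_right (Submodule.mem_span_singleton_self v))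

theorem disjoint_sup_span_singleton {S U : Submodule F V} {v : V} (hSU : Disjoint S U)
    (hv : v ∉ S ⊔ U) : Disjoint (S ⊔ span F {v}) U := by
  rw [sup_comm]
  exact hSU.disjoint_sup_left_of_disjoint_sup_right
    (Submodule.disjoint_span_singleton.2 fun h ↦ absurd h hv).symm

theorem finrank_sup_eq_of_disjoint [FiniteDimensional F V] {S U : Submodule F V}
    (h : Disjoint S U) : finrank F ↥(S ⊔ U) = finrank F S + finrank F U := by
  rw [← Submodule.finrank_sup_add_finrank_inf_eq, h.eq_bot, finrank_bot, add_zero]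

theorem exists_eq_span_singleton_of_finrank_eq_one {S : Submodule F V} (hS : finrank F S = 1) :
    ∃ v ≠ 0, S = span F {v} := by
  obtain ⟨v, hv, hspan⟩ := finrank_eq_one_iff'.1 hS
  refine ⟨v, by simpa using hv, le_antisymm (fun w hw ↦ ?_) ?_⟩
  · obtain ⟨a, ha⟩ := hspan ⟨w, hw⟩
    exact Submodule.mem_span_singleton.2 ⟨a, congrArg Subtype.val ha⟩
  · exact (Submodule.span_singleton_le_iff_mem _ S).2 v.2

theorem exists_le_le_finrank_eq_add [FiniteDimensional F V] {T S : Submodule F V} (hTS : T ≤ S)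
    {j : ℕ} (hj : finrank F T + j ≤ finrank F S) :
    ∃ R, T ≤ R ∧ R ≤ S ∧ finrank F R = finrank F T + j := by
  induction j with
  | zero => exact ⟨T, le_rfl, hTS, rfl⟩
  | succ j ih =>
    obtain ⟨R, hTR, hRS, hR⟩ := ih (by omega)
    obtain ⟨v, hvS, hvR⟩ : ∃ v ∈ S, v ∉ R :=
      SetLike.exists_of_lt (hRS.lt_of_ne fun h ↦ by subst h; omega)
    exact ⟨R ⊔ span F {v}, hTR.trans le_sup_left,
      sup_le hRS ((Submodule.span_singleton_le_iff_mem v S).2 hvS), by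
        rw [Submodule.finrank_sup_span_singleton hvR, hR, add_assoc]⟩

end LinearAlgebra

theorem one_lt_cast_card {α : Type*} [Fintype α] [Nontrivial α] : (1 : ℝ) < Fintype.card α := by
  exact_mod_cast Fintype.one_lt_card

section VectorSums

open Module (finrank)
open Submodule (span)

variable {F V : Type*} [Field F] [AddCommGroup V] [Module F V] [Fintype V]

/-- The sum of the values of `h` over all vectors of `W`, the zero vector included. -/
noncomputable def sumOn (h : V → ℝ) (W : Submodule F V) : ℝ :=
  ∑ v with v ∈ W, h v

theorem sumOn_bot (h : V → ℝ) : sumOn h (⊥ : Submodule F V) = h 0 := by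
  simp [sumOn, sum_filter]

theorem sumOn_eq_add {S W : Submodule F V} (hSW : S ≤ W) (h : V → ℝ) :
    sumOn h W = sumOn h S + ∑ v with v ∈ W ∧ v ∉ S, h v := by
  rw [sumOn, ← sum_filter_add_sum_filter_not _ (· ∈ S), filter_filter, filter_filter]
  congr 2
  exact filter_congr fun v _ ↦ and_iff_right_of_imp fun hv ↦ hSW hv

theorem sumOn_top_eq_add (S : Submodule F V) (h : V → ℝ) :
    sumOn h (⊤ : Submodule F V) = sumOn h S + ∑ v with v ∉ S, h v := by
  simpa only [Submodule.mem_top, true_and] using sumOn_eq_add (le_top : S ≤ ⊤) h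

/-- Invariance under nonzero scalars: away from `0`, such an `h` is a function on the points of the
projective space of `V`. -/
def ScalarInvariant (F : Type*) {V : Type*} [Field F] [AddCommGroup V] [Module F V]
    (h : V → ℝ) : Prop :=
  ∀ ⦃a : F⦄, a ≠ 0 → ∀ v, h (a • v) = h v

variable [Fintype F]

local notation "q" => Fintype.card F

theorem sumOn_one (W : Submodule F V) : sumOn (fun _ ↦ 1) W = (q : ℝ) ^ finrank F W := by
  rw [sumOn, sum_const, nsmul_one, ← Fintype.card_subtype, Module.card_eq_pow_finrank (K := F),
    Nat.cast_pow]

theorem card_mem_notMem {S W : Submodule F V} (hSW : S ≤ W) :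
    (#{v : V | v ∈ W ∧ v ∉ S} : ℝ) = (q : ℝ) ^ finrank F W - (q : ℝ) ^ finrank F S := by
  have h := sumOn_eq_add hSW fun _ ↦ 1
  rw [sumOn_one, sumOn_one, sum_const, nsmul_one] at h
  linarith

theorem card_notMem (S : Submodule F V) :
    (#{v : V | v ∉ S} : ℝ) = (q : ℝ) ^ finrank F V - (q : ℝ) ^ finrank F S := by
  simpa only [Submodule.mem_top, true_and, finrank_top] using card_mem_notMem (le_top : S ≤ ⊤)

theorem sumOn_eq_of_forall_notMem {S W : Submodule F V} (hSW : S ≤ W) {h : V → ℝ} {x : ℝ}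
    (hx : ∀ v ∈ W, v ∉ S → h v = x) :
    sumOn h W = sumOn h S + ((q : ℝ) ^ finrank F W - (q : ℝ) ^ finrank F S) * x := by
  rw [sumOn_eq_add hSW, sum_congr rfl fun v hv ↦ ?_, sum_const, nsmul_eq_mul, card_mem_notMem hSW]
  exact (mem_filter.1 hv).2.elim (hx v)

theorem sumOn_eq_of_forall_ne_zero {W : Submodule F V} {h : V → ℝ} {x : ℝ}
    (hx : ∀ v ∈ W, v ≠ 0 → h v = x) :
    sumOn h W = h 0 + ((q : ℝ) ^ finrank F W - 1) * x := by
  have := sumOn_eq_of_forall_notMem bot_le fun v hv hv0 ↦ hx v hv hv0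
  rwa [sumOn_bot, finrank_bot, pow_zero] at this

theorem sumOn_span_singleton {h : V → ℝ} (hh : ScalarInvariant F h) {w : V}
    (hw : w ≠ 0) : sumOn h (span F {w}) = h 0 + ((q : ℝ) - 1) * h w := by
  rw [sumOn_eq_of_forall_ne_zero (x := h w), finrank_span_singleton hw, pow_one]
  intro v hv hv0
  obtain ⟨a, rfl⟩ := Submodule.mem_span_singleton.1 hv
  exact hh (fun ha ↦ hv0 (by rw [ha, zero_smul])) w

end VectorSums

section Extensions

open Module (finrank)
open Submodule (span)

/-- The `m`-dimensional subspaces of `V`. -/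
abbrev Subspaces (F V : Type*) [Field F] [AddCommGroup V] [Module F V] (m : ℕ) :=
  {W : Submodule F V // finrank F W = m}

variable {F V : Type*} [Field F] [AddCommGroup V] [Module F V]

theorem Subspaces.le_iff_eq [FiniteDimensional F V] {m : ℕ} {W U : Subspaces F V m} :
    W.1 ≤ U.1 ↔ U = W :=
  ⟨fun h ↦ Subtype.ext (Submodule.eq_of_le_of_finrank_eq h (W.2.trans U.2.symm)).symm,
    fun h ↦ h ▸ le_rfl⟩

/-- The `m`-dimensional subspaces which contain `S` and are disjoint from `U`. -/
noncomputable def extensions (m : ℕ) [Fintype (Subspaces F V m)] (S U : Submodule F V) :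
    Finset (Subspaces F V m) :=
  {W | S ≤ W.1 ∧ Disjoint W.1 U}

variable {m : ℕ} [Fintype (Subspaces F V m)]

theorem mem_extensions {S U : Submodule F V} {W : Subspaces F V m} :
    W ∈ extensions m S U ↔ S ≤ W.1 ∧ Disjoint W.1 U :=
  mem_filter_univ W

theorem card_extensions_of_finrank_eq [FiniteDimensional F V] {S U : Submodule F V}
    (hSU : Disjoint S U) (hS : finrank F S = m) : #(extensions m S U) = 1 := by
  refine card_eq_one.2 ⟨⟨S, hS⟩, ?_⟩
  ext W
  rw [mem_extensions, mem_singleton, ← Subspaces.le_iff_eq (W := ⟨S, hS⟩)]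
  exact and_iff_left_of_imp fun h ↦ by
    rwa [Subspaces.le_iff_eq (W := ⟨S, hS⟩).1 h]

/-- The sum of the values of `f` over all `m`-dimensional subspaces through `v`. -/
noncomputable def sumThrough (f : Subspaces F V m → ℝ) (v : V) : ℝ :=
  ∑ U with v ∈ U.1, f U

theorem scalarInvariant_sumThrough (f : Subspaces F V m → ℝ) :
    ScalarInvariant F (sumThrough f) := fun a ha v ↦ by
  simp only [sumThrough, Submodule.smul_mem_iff _ ha]

theorem sum_extensions_sum_notMem [Fintype V] (S U : Submodule F V) (h : V → ℝ) :
    ∑ W ∈ extensions m S U, ∑ v with v ∈ W.1 ∧ v ∉ S, h v =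
      ∑ v with v ∉ S ⊔ U, (#(extensions m (S ⊔ span F {v}) U) : ℝ) * h v := by
  simp only [← nsmul_eq_mul, ← sum_const]
  refine sum_comm' fun W v ↦ ?_
  simp only [mem_extensions, mem_filter_univ, sup_le_iff, Submodule.span_singleton_le_iff_mem]
  constructor
  · rintro ⟨⟨hSW, hWU⟩, hvW, hvS⟩
    exact ⟨⟨⟨hSW, hvW⟩, hWU⟩, fun hv ↦
      hvS ((sup_inf_eq_left_of_le_of_disjoint hSW hWU).le ⟨hv, hvW⟩)⟩
  · rintro ⟨⟨⟨hSW, hvW⟩, hWU⟩, hv⟩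
    exact ⟨⟨hSW, hWU⟩, hvW, fun hvS ↦ hv (Submodule.mem_sup_left hvS)⟩

variable [Fintype F]

local notation "q" => Fintype.card F

theorem card_extensions [Finite V] {e : ℕ} {S U : Submodule F V}
    (hN : finrank F V = finrank F U + m + e) (hSU : Disjoint S U) :
    #(extensions m S U) = extensionCount q (finrank F U) e m (finrank F S) := by
  cases nonempty_fintype V
  obtain hm | hm := lt_or_ge m (finrank F S)
  · rw [extensionCount_of_lt _ _ _ hm, card_eq_zero, eq_empty_iff_forall_notMem]
    intro W hW
    have := Submodule.finrank_mono (mem_extensions.1 hW).1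
    omega
  obtain ⟨t, ht⟩ := Nat.exists_eq_add_of_le hm
  induction t generalizing S with
  | zero =>
    rw [card_extensions_of_finrank_eq hSU ht.symm, ht, extensionCount_add, gbinom_zero_right,
      mul_zero, pow_zero, mul_one]
  | succ t ih =>
    have hright (v) (hv : v ∈ ({v | v ∉ S ⊔ U} : Finset V)) :
        (#(extensions m (S ⊔ span F {v}) U) : ℝ) * 1 =
          extensionCount q (finrank F U) e m (finrank F S + 1) := by
      rw [mem_filter_univ] at hv
      have hdim := Submodule.finrank_sup_span_singleton fun h ↦ hv (Submodule.mem_sup_left h)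
      rw [mul_one, ih (disjoint_sup_span_singleton hSU hv) (by omega) (by omega), hdim]
    have hleft (W) (hW : W ∈ extensions m S U) :
        ∑ v with v ∈ W.1 ∧ v ∉ S, (1 : ℝ) = (q : ℝ) ^ m - (q : ℝ) ^ finrank F S := by
      rw [sum_const, nsmul_one, card_mem_notMem (mem_extensions.1 hW).1, W.2]
    have hsum := sum_extensions_sum_notMem (m := m) S U fun _ ↦ 1
    rw [sum_congr rfl hleft, sum_congr rfl hright, sum_const, sum_const, nsmul_eq_mul,
      nsmul_eq_mul, card_notMem, finrank_sup_eq_of_disjoint hSU, hN] at hsum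
    have hpos : (0 : ℝ) < (q : ℝ) ^ m - (q : ℝ) ^ finrank F S :=
      sub_pos.2 (pow_lt_pow_right₀ one_lt_cast_card (by omega))
    have hrec := pow_sub_pow_mul_extensionCount q (finrank F U) e (i := finrank F S) (m := m)
      (by omega)
    rw [mul_comm, ← hrec] at hsum
    exact_mod_cast mul_left_cancel₀ hpos.ne' hsum

theorem sum_extensions_sumOn [Fintype V] {e : ℕ} {S U : Submodule F V}
    (hN : finrank F V = finrank F U + m + e) (hSU : Disjoint S U) (h : V → ℝ) :
    ∑ W ∈ extensions m S U, sumOn h W.1 =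
      extensionCount q (finrank F U) e m (finrank F S) * sumOn h S +
        extensionCount q (finrank F U) e m (finrank F S + 1) *
          (sumOn h (⊤ : Submodule F V) - sumOn h (S ⊔ U)) := by
  rw [sum_congr rfl fun W hW ↦ sumOn_eq_add (mem_extensions.1 hW).1 h, sum_add_distrib, sum_const,
    nsmul_eq_mul, card_extensions hN hSU, sum_extensions_sum_notMem, sumOn_top_eq_add (S ⊔ U),
    add_sub_cancel_left, mul_sum]
  congr 1
  refine sum_congr rfl fun v hv ↦ ?_
  rw [mem_filter_univ] at hv
  rw [card_extensions hN (disjoint_sup_span_singleton hSU hv),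
    Submodule.finrank_sup_span_singleton fun h ↦ hv (Submodule.mem_sup_left h)]

end Extensions

section Kernel

open Module (finrank)
open Submodule (span)

theorem inf_eq_sup_span_singleton_iff {F V : Type*} [Field F] [AddCommGroup V] [Module F V]
    {S₀ S T U : Submodule F V} {v : V} (hv : v ∉ S₀) (hS : S₀ ⊔ span F {v} = S) (hT : T ≤ S₀) :
    U ⊓ S = T ⊔ span F {v} ↔ U ⊓ S₀ = T ∧ v ∈ U := by
  rw [← Submodule.span_singleton_le_iff_mem (p := U)]
  subst hS
  constructor
  · intro h
    have hdisj : Disjoint S₀ (span F {v}) :=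
      Submodule.disjoint_span_singleton.2 fun hv' ↦ absurd hv' hv
    refine ⟨?_, le_sup_right.trans (h.ge.trans inf_le_left)⟩
    rw [← sup_inf_eq_left_of_le_of_disjoint hT hdisj, ← h, inf_assoc,
      inf_eq_right.2 (le_sup_left : S₀ ≤ S₀ ⊔ span F {v})]
  · rintro ⟨rfl, hvU⟩
    exact (inf_sup_assoc_of_le S₀ hvU).symm

variable {F V : Type*} [Field F] [AddCommGroup V] [Module F V] {m : ℕ} [Fintype (Subspaces F V m)]

theorem sum_eq_zero_of_sumThrough_eq_zero [Finite F] [Finite V] (hm : 1 ≤ m)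
    {g : Subspaces F V m → ℝ} (hg : ∀ v ≠ 0, sumThrough g v = 0) : ∑ U, g U = 0 := by
  cases nonempty_fintype F
  cases nonempty_fintype V
  have hswap : ∑ v with v ≠ 0, sumThrough g v =
      ∑ U, ∑ v with v ∈ U.1 ∧ v ∉ (⊥ : Submodule F V), g U :=
    sum_comm' fun v U ↦ by simp [and_comm]
  have hcard (U : Subspaces F V m) :
      ∑ v with v ∈ U.1 ∧ v ∉ (⊥ : Submodule F V), g U = ((Fintype.card F : ℝ) ^ m - 1) * g U := by
    rw [sum_const, nsmul_eq_mul, card_mem_notMem bot_le, U.2, finrank_bot, pow_zero]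
  rw [sum_congr rfl fun v hv ↦ hg v ((mem_filter_univ v).1 hv), sum_const_zero,
    sum_congr rfl fun U _ ↦ hcard U, ← mul_sum] at hswap
  refine (mul_eq_zero.1 hswap.symm).resolve_left (sub_ne_zero.2 (ne_of_gt ?_))
  exact one_lt_pow₀ one_lt_cast_card (by omega)

variable [Fintype F]

local notation "q" => Fintype.card F

theorem card_mem_inf_notMem [Fintype V] {S₀ S T U : Submodule F V} (hS₀ : S₀ ≤ S)
    (hdim : finrank F S = finrank F S₀ + 1) (hU : U ⊓ S₀ = T) :
    (#{v : V | v ∈ U ∧ v ∈ S ∧ v ∉ S₀} : ℝ) =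
      if U ⊓ S = T then 0 else (q : ℝ) ^ (finrank F T + 1) - (q : ℝ) ^ finrank F T := by
  have hset : #{v : V | v ∈ U ∧ v ∈ S ∧ v ∉ S₀} = #{v : V | v ∈ U ⊓ S ∧ v ∉ T} := by
    subst hU
    congr 1
    refine filter_congr fun v _ ↦ ?_
    simp only [Submodule.mem_inf]
    tauto
  have hle : T ≤ U ⊓ S := hU ▸ inf_le_inf_left U hS₀
  rw [hset, card_mem_notMem hle]
  split_ifs with h
  · rw [h, sub_self]
  · have hlt := Submodule.finrank_lt_finrank_of_lt (hle.lt_of_ne' h)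
    have hinf := Submodule.finrank_sup_add_finrank_inf_eq (U ⊓ S) S₀
    have hsup : finrank F ↥(U ⊓ S ⊔ S₀) ≤ finrank F S :=
      Submodule.finrank_mono (sup_le inf_le_right hS₀)
    rw [inf_assoc, inf_eq_right.2 hS₀, hU] at hinf
    rw [show finrank F ↥(U ⊓ S) = finrank F T + 1 by omega]

theorem sum_sum_inf_eq_sup_span_singleton [Fintype V] (g : Subspaces F V m → ℝ)
    {S₀ S T : Submodule F V} (hT : T ≤ S₀) (hS₀ : S₀ ≤ S)
    (hdim : finrank F S = finrank F S₀ + 1) :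
    ∑ v with v ∈ S ∧ v ∉ S₀, ∑ U with U.1 ⊓ S = T ⊔ span F {v}, g U =
      ((q : ℝ) ^ (finrank F T + 1) - (q : ℝ) ^ finrank F T) *
        (∑ U with U.1 ⊓ S₀ = T, g U - ∑ U with U.1 ⊓ S = T, g U) := by
  have hswap : ∑ v with v ∈ S ∧ v ∉ S₀, ∑ U with U.1 ⊓ S = T ⊔ span F {v}, g U =
      ∑ U with U.1 ⊓ S₀ = T, ∑ v with v ∈ U.1 ∧ v ∈ S ∧ v ∉ S₀, g U := by
    refine sum_comm' fun v U ↦ ?_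
    simp only [mem_filter_univ]
    have hiff (hvS : v ∈ S) (hv : v ∉ S₀) :
        U.1 ⊓ S = T ⊔ span F {v} ↔ U.1 ⊓ S₀ = T ∧ v ∈ U.1 := by
      refine inf_eq_sup_span_singleton_iff hv ?_ hT
      refine Submodule.eq_of_le_of_finrank_eq
        (sup_le hS₀ ((Submodule.span_singleton_le_iff_mem v S).2 hvS)) ?_
      rw [Submodule.finrank_sup_span_singleton hv, hdim]
    tauto
  have hsub : ({U | U.1 ⊓ S = T} : Finset (Subspaces F V m)) =
      {U ∈ ({U | U.1 ⊓ S₀ = T} : Finset (Subspaces F V m)) | U.1 ⊓ S = T} := by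
    rw [filter_filter]
    refine filter_congr fun U _ ↦ ⟨fun h ↦ ⟨?_, h⟩, And.right⟩
    rw [← inf_eq_right.2 hS₀, ← inf_assoc, h, inf_eq_left.2 hT]
  rw [hswap, hsub, sum_filter (fun U : Subspaces F V m ↦ U.1 ⊓ S = T), ← sum_sub_distrib, mul_sum]
  refine sum_congr rfl fun U hU ↦ ?_
  rw [sum_const, nsmul_eq_mul, card_mem_inf_notMem hS₀ hdim ((mem_filter_univ U).1 hU)]
  split_ifs <;> ring

variable [Finite V]

theorem sum_inf_eq {i : ℕ} {g : Subspaces F V m → ℝ}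
    (hg : ∀ S : Submodule F V, finrank F S < i → ∑ U with S ≤ U.1, g U = 0) {r : ℕ}
    {S T : Submodule F V} (hTS : T ≤ S) (hdim : finrank F S = finrank F T + r)
    (hi : finrank F S ≤ i) :
    ∑ U with U.1 ⊓ S = T, g U = (-1) ^ r * (q : ℝ) ^ r.choose 2 * ∑ U with S ≤ U.1, g U := by
  cases nonempty_fintype V
  induction r generalizing S T with
  | zero =>
    obtain rfl := Submodule.eq_of_le_of_finrank_eq hTS hdim.symm
    simp only [inf_eq_right, pow_zero, Nat.choose_zero_succ, one_mul]
  | succ r ih =>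
    obtain ⟨S₀, hTS₀, hS₀S, hS₀⟩ := exists_le_le_finrank_eq_add hTS (j := r) (by omega)
    have hzero : ∑ U : Subspaces F V m with U.1 ⊓ S₀ = T, g U = 0 := by
      rw [ih hTS₀ hS₀ (by omega), hg S₀ (by omega), mul_zero]
    have hstep (v) (hv : v ∈ ({v | v ∈ S ∧ v ∉ S₀} : Finset V)) :
        ∑ U : Subspaces F V m with U.1 ⊓ S = T ⊔ span F {v}, g U =
          (-1) ^ r * (q : ℝ) ^ r.choose 2 * ∑ U with S ≤ U.1, g U := by
      obtain ⟨hvS, hvS₀⟩ := (mem_filter_univ v).1 hv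
      have := Submodule.finrank_sup_span_singleton fun hvT ↦ hvS₀ (hTS₀ hvT)
      exact ih (sup_le hTS ((Submodule.span_singleton_le_iff_mem v S).2 hvS)) (by omega) (by omega)
    have hrec := sum_sum_inf_eq_sup_span_singleton g hTS₀ hS₀S (by omega)
    rw [sum_congr rfl hstep, sum_const, nsmul_eq_mul, card_mem_notMem hS₀S, hzero, hdim, hS₀]
      at hrec
    have hpos : (0 : ℝ) < (q : ℝ) ^ (finrank F T + 1) - (q : ℝ) ^ finrank F T :=
      sub_pos.2 (pow_lt_pow_right₀ one_lt_cast_card (Nat.lt_succ_self _))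
    refine mul_left_cancel₀ hpos.ne' ?_
    rw [Nat.choose_succ_succ' r 1, Nat.choose_one_right]
    linear_combination hrec

theorem sum_le_sum_disjoint {e : ℕ} (hN : finrank F V = m + m + e) (g : Subspaces F V m → ℝ)
    (S : Submodule F V) :
    ∑ W : Subspaces F V m with S ≤ W.1, ∑ U : Subspaces F V m with Disjoint U.1 W.1, g U =
      extensionCount q m e m (finrank F S) * ∑ U : Subspaces F V m with Disjoint U.1 S, g U := by
  rw [sum_comm' (t' := {U | Disjoint U.1 S}) (s' := fun U ↦ extensions m S U.1), mul_sum]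
  · refine sum_congr rfl fun U hU ↦ ?_
    rw [sum_const, nsmul_eq_mul, card_extensions (e := e) (by rw [hN, U.2])
      ((mem_filter_univ U).1 hU).symm, U.2]
  · intro W U
    simp only [mem_filter_univ, mem_extensions, disjoint_comm (a := U.1)]
    exact ⟨fun h ↦ ⟨h, h.2.mono_left h.1⟩, And.left⟩

theorem sum_le_eq_zero_of_kernel {e : ℕ} (hN : finrank F V = m + m + e)
    {g : Subspaces F V m → ℝ} (hg : ∀ v ≠ 0, sumThrough g v = 0) (hsum : ∑ U, g U = 0)
    (hker : ∀ W : Subspaces F V m, ∑ U : Subspaces F V m with Disjoint U.1 W.1, g U =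
      -(extensionCount q m e m 1 * g W)) {i : ℕ} (him : i ≤ m) {S : Submodule F V}
    (hS : finrank F S = i) : ∑ U with S ≤ U.1, g U = 0 := by
  induction i using Nat.strong_induction_on generalizing S with
  | _ i ih =>
    obtain rfl | rfl | hi : i = 0 ∨ i = 1 ∨ 2 ≤ i := by omega
    · rw [Submodule.finrank_eq_zero.1 hS]
      simpa only [bot_le, filter_true] using hsum
    · obtain ⟨v, hv, rfl⟩ := exists_eq_span_singleton_of_finrank_eq_one hS
      simpa only [Submodule.span_singleton_le_iff_mem, sumThrough] using hg v hv
    have hdisj : ∑ U : Subspaces F V m with Disjoint U.1 S, g U =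
        (-1) ^ i * (q : ℝ) ^ i.choose 2 * ∑ U with S ≤ U.1, g U := by
      simp only [disjoint_iff]
      refine sum_inf_eq (fun S' hS' ↦ ih _ hS' (by omega) rfl) bot_le ?_ hS.le
      rw [finrank_bot, zero_add, hS]
    -- Counting the disjoint pairs `(W, U)` with `S ≤ W` in two ways gives
    -- `(c₁ + (-1) ^ i * q ^ (i.choose 2) * cᵢ) * ∑ U with S ≤ U.1, g U = 0`, where `c₁` dominates.
    have hdouble := sum_le_sum_disjoint hN g S
    rw [sum_congr rfl fun W _ ↦ hker W, sum_neg_distrib, ← mul_sum, hdisj, hS] at hdouble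
    have hlt : (extensionCount q m e m i : ℝ) * (q : ℝ) ^ i.choose 2 <
        extensionCount q m e m 1 := by
      exact_mod_cast extensionCount_mul_pow_choose_two_lt e Fintype.one_lt_card hi him
    have hnonneg : (0 : ℝ) ≤ extensionCount q m e m i * (q : ℝ) ^ i.choose 2 := by positivity
    have hcoeff : (extensionCount q m e m 1 : ℝ) +
        (-1) ^ i * (extensionCount q m e m i * (q : ℝ) ^ i.choose 2) ≠ 0 := by
      obtain h | h := neg_one_pow_eq_or ℝ i <;> rw [h] <;> linarith
    refine (mul_eq_zero.1 ?_).resolve_left hcoeff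
    linear_combination -hdouble

theorem eq_zero_of_kernel {e : ℕ} (hm : 1 ≤ m) (hN : finrank F V = m + m + e)
    {g : Subspaces F V m → ℝ} {C : ℝ} (hg : ∀ v ≠ 0, sumThrough g v = 0)
    (hker : ∀ W : Subspaces F V m, ∑ U : Subspaces F V m with Disjoint U.1 W.1, g U +
      extensionCount q m e m 1 * g W = C) (W : Subspaces F V m) : g W = 0 := by
  have hsum := sum_eq_zero_of_sumThrough_eq_zero hm hg
  have hC : C = 0 := by
    have hdouble := sum_le_sum_disjoint hN g ⊥
    simp only [bot_le, disjoint_bot_right, filter_true, hsum, mul_zero,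
      fun W ↦ eq_sub_of_add_eq (hker W), sum_sub_distrib, ← mul_sum, sub_zero, sum_const,
      nsmul_eq_mul, mul_eq_zero, Nat.cast_eq_zero, card_univ] at hdouble
    exact hdouble.resolve_left (@Fintype.card_ne_zero _ _ ⟨W⟩)
  have hker' (W : Subspaces F V m) : ∑ U : Subspaces F V m with Disjoint U.1 W.1, g U =
      -(extensionCount q m e m 1 * g W) := by linear_combination hker W + hC
  have hW := sum_le_eq_zero_of_kernel hN hg hsum hker' le_rfl W.2
  simpa only [Subspaces.le_iff_eq, filter_eq', mem_univ, if_true, sum_singleton] using hW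

end Kernel

section Potential

open Module (finrank)
open Submodule (span)

variable {F V : Type*} [Field F] [AddCommGroup V] [Module F V] [Fintype V]
  {m : ℕ} [Fintype (Subspaces F V m)]

local notation "q" => Fintype.card F

theorem sum_disjoint_sumOn [Fintype F] {e : ℕ} (hN : finrank F V = m + m + e) (h : V → ℝ)
    (W : Subspaces F V m) :
    ∑ U : Subspaces F V m with Disjoint U.1 W.1, sumOn h U.1 =
      extensionCount q m e m 0 * h 0 +
        extensionCount q m e m 1 * (sumOn h (⊤ : Submodule F V) - sumOn h W.1) := by
  have := sum_extensions_sumOn (e := e) (by rw [hN, W.2]) (disjoint_bot_left (a := W.1)) h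
  simpa only [extensions, bot_le, true_and, W.2, finrank_bot, sumOn_bot, bot_sup_eq, zero_add]
    using this

theorem sumThrough_sumOn [Fintype F] {e : ℕ} (hN : finrank F V = m + e) {h : V → ℝ}
    (hh : ScalarInvariant F h) {w : V} (hw : w ≠ 0) :
    sumThrough (fun U : Subspaces F V m ↦ sumOn h U.1) w =
      extensionCount q 0 e m 1 * (h 0 + (q - 1) * h w) +
        extensionCount q 0 e m 2 *
          (sumOn h (⊤ : Submodule F V) - (h 0 + (q - 1) * h w)) := by
  have := sum_extensions_sumOn (m := m) (e := e) (U := ⊥) (by rw [hN, finrank_bot, zero_add])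
    (disjoint_bot_right (a := span F {w})) h
  rw [sup_bot_eq, sumOn_span_singleton hh hw, finrank_bot, finrank_span_singleton hw] at this
  simpa only [sumThrough, extensions, Submodule.span_singleton_le_iff_mem, disjoint_bot_right,
    and_true] using this

theorem exists_sumThrough_sumOn_eq [Finite F] {e : ℕ} (hm : 1 ≤ m) (he : 1 ≤ e)
    (hN : finrank F V = m + e) (f : Subspaces F V m → ℝ) :
    ∃ h : V → ℝ, ScalarInvariant F h ∧ (∃ t ≠ 0, ∀ v ≠ 0, h v = t * sumThrough f v) ∧
      ∀ w ≠ 0, sumThrough (fun U : Subspaces F V m ↦ sumOn h U.1) w = sumThrough f w := by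
  cases nonempty_fintype F
  set d := sumThrough f with hd
  set l₁ : ℝ := (extensionCount q 0 e m 1 : ℝ)
  set l₂ : ℝ := (extensionCount q 0 e m 2 : ℝ)
  have hl₁0 : l₁ ≠ 0 := Nat.cast_ne_zero.2 (extensionCount_pos 0 e Fintype.card_pos hm).ne'
  have hcoeff : (l₁ - l₂) * (q - 1) ≠ 0 :=
    mul_ne_zero
      (sub_pos.2 (Nat.cast_lt.2 (extensionCount_two_lt_one Fintype.card_pos hm he))).ne'
      (sub_pos.2 one_lt_cast_card).ne'
  set t : ℝ := ((l₁ - l₂) * (q - 1))⁻¹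
  set R : ℝ := ∑ v with v ∉ (⊥ : Submodule F V), t * d v
  set h : V → ℝ := fun v ↦ if v = 0 then -(l₂ * R / l₁) else t * d v with hh
  have h_zero : h 0 = -(l₂ * R / l₁) := if_pos rfl
  have h_ne (v : V) (hv : v ≠ 0) : h v = t * d v := if_neg hv
  have h_inv : ScalarInvariant F h := fun a ha v ↦ by
    simp only [hh, smul_eq_zero_iff_right ha, scalarInvariant_sumThrough f ha v, hd]
  have h_top : sumOn h (⊤ : Submodule F V) = h 0 + R := by
    rw [sumOn_top_eq_add ⊥, sumOn_bot]
    exact congrArg _ (sum_congr rfl fun v hv ↦ h_ne v ((mem_filter_univ v).1 hv))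
  refine ⟨h, h_inv, ⟨t, inv_ne_zero hcoeff, h_ne⟩, fun w hw ↦ ?_⟩
  have ht : (l₁ - l₂) * (q - 1) * t = 1 := mul_inv_cancel₀ hcoeff
  have hcancel : l₁ * (l₂ * R / l₁) = l₂ * R := mul_div_cancel₀ _ hl₁0
  rw [sumThrough_sumOn hN h_inv hw, h_top, h_ne w hw, h_zero]
  linear_combination d w * ht - hcancel

theorem exists_sumOn_eq [Fintype F] {e : ℕ} (hm : 1 ≤ m) (hN : finrank F V = m + m + e)
    {f : Subspaces F V m → ℝ} {C : ℝ}
    (hf : ∀ W : Subspaces F V m, ∑ U : Subspaces F V m with Disjoint U.1 W.1, f U +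
      extensionCount q m e m 1 * f W = C) :
    ∃ h : V → ℝ, ScalarInvariant F h ∧ (∃ t ≠ 0, ∀ v ≠ 0, h v = t * sumThrough f v) ∧
      ∀ W : Subspaces F V m, sumOn h W.1 = f W := by
  obtain ⟨h, h_inv, h_through, hsum⟩ :=
    exists_sumThrough_sumOn_eq (e := m + e) hm (by omega) (by rw [hN, add_assoc]) f
  refine ⟨h, h_inv, h_through, fun W ↦ sub_eq_zero.1 ?_⟩
  refine eq_zero_of_kernel (g := fun W ↦ sumOn h W.1 - f W) (C := extensionCount q m e m 0 * h 0 +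
    extensionCount q m e m 1 * sumOn h (⊤ : Submodule F V) - C) hm hN (fun v hv ↦ ?_)
    (fun W ↦ ?_) W
  · have := hsum v hv
    simp only [sumThrough] at this ⊢
    rw [sum_sub_distrib, this, sub_self]
  · rw [sum_sub_distrib, sum_disjoint_sumOn hN]
    linear_combination -hf W

end Potential

section Constancy

open Module (finrank)
open Submodule (span)

variable {F V : Type*} [Field F] [AddCommGroup V] [Module F V] [Fintype V]

theorem sumOn_map {V' : Type*} [AddCommGroup V'] [Module F V'] [Fintype V'] {f : V' →ₗ[F] V}
    (hf : Function.Injective f) (h : V → ℝ) (U : Submodule F V') :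
    sumOn h (U.map f) = sumOn (h ∘ f) U := by
  refine (sum_nbij f (fun v hv ↦ ?_) hf.injOn (fun w hw ↦ ?_) fun _ _ ↦ rfl).symm
  · rw [mem_filter_univ] at hv ⊢
    exact Submodule.mem_map_of_mem hv
  · obtain ⟨v, hv, rfl⟩ := Submodule.mem_map.1 ((mem_filter_univ w).1 hw)
    exact ⟨v, mem_coe.2 ((mem_filter_univ v).2 hv), rfl⟩

section Disjoint

variable {m e : ℕ} {W : Submodule F V} {h : V → ℝ} {s : ℝ}

local notation "q" => Fintype.card F

theorem extensionCount_mul_sub_eq [Fintype F] (hN : finrank F V = finrank F W + m + e)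
    (h_inv : ScalarInvariant F h) (hs : ∀ U : Subspaces F V m, Disjoint U.1 W → sumOn h U.1 = s)
    {p : V} (hp : p ∉ W) :
    (extensionCount q (finrank F W) e m 1 : ℝ) * (s - (h 0 + (q - 1) * h p)) =
      extensionCount q (finrank F W) e m 2 *
        (sumOn h (⊤ : Submodule F V) - sumOn h (W ⊔ span F {p})) := by
  have : Fintype (Subspaces F V m) := Fintype.ofFinite _
  have hp0 : p ≠ 0 := fun h0 ↦ hp (h0 ▸ W.zero_mem)
  have hdisj : Disjoint (span F {p}) W := ((Submodule.disjoint_span_singleton' hp0).2 hp).symm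
  have hsum := sum_extensions_sumOn hN hdisj h
  rw [sum_congr rfl fun U hU ↦ hs U (mem_extensions.1 hU).2, sum_const, nsmul_eq_mul,
    card_extensions hN hdisj, finrank_span_singleton hp0, sumOn_span_singleton h_inv hp0,
    sup_comm] at hsum
  linear_combination hsum

theorem eq_of_mem_sup_span_singleton [Finite F] (hm : 1 ≤ m)
    (hN : finrank F V = finrank F W + m + e) (h_inv : ScalarInvariant F h)
    (hs : ∀ U : Subspaces F V m, Disjoint U.1 W → sumOn h U.1 = s)
    {p p' : V} (hp : p ∉ W) (hp' : p' ∉ W) (hpp' : p' ∈ W ⊔ span F {p}) : h p' = h p := by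
  cases nonempty_fintype F
  have h₁ := extensionCount_mul_sub_eq hN h_inv hs hp
  have h₂ := extensionCount_mul_sub_eq hN h_inv hs hp'
  rw [sup_span_singleton_eq_of_mem hpp' hp', ← h₁] at h₂
  have hpos : (extensionCount q (finrank F W) e m 1 : ℝ) ≠ 0 :=
    Nat.cast_ne_zero.2 (extensionCount_pos _ e Fintype.card_pos hm).ne'
  refine mul_left_cancel₀ (sub_pos.2 (one_lt_cast_card (α := F))).ne' ?_
  linear_combination -mul_left_cancel₀ hpos h₂

theorem eq_of_notMem_of_notMem [Finite F] (hm : 1 ≤ m) (he : 1 ≤ e)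
    (hN : finrank F V = finrank F W + m + e) (h_inv : ScalarInvariant F h)
    (hs : ∀ U : Subspaces F V m, Disjoint U.1 W → sumOn h U.1 = s)
    {p p' : V} (hp : p ∉ W) (hp' : p' ∉ W) : h p' = h p := by
  cases nonempty_fintype F
  have hlinear {p : V} (hp : p ∉ W) :
      (extensionCount q (finrank F W) e m 1 : ℝ) * (s - (h 0 + (q - 1) * h p)) =
        extensionCount q (finrank F W) e m 2 * (sumOn h (⊤ : Submodule F V) -
          (sumOn h W + ((q : ℝ) ^ (finrank F W + 1) - (q : ℝ) ^ finrank F W) * h p)) := by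
    rw [extensionCount_mul_sub_eq hN h_inv hs hp,
      sumOn_eq_of_forall_notMem (le_sup_left : W ≤ W ⊔ span F {p}) fun v hv hvW ↦
        eq_of_mem_sup_span_singleton hm hN h_inv hs hp hvW hv,
      Submodule.finrank_sup_span_singleton hp]
  have hlt : (extensionCount q (finrank F W) e m 2 : ℝ) * (q : ℝ) ^ finrank F W <
      extensionCount q (finrank F W) e m 1 := by
    exact_mod_cast extensionCount_two_mul_pow_lt (finrank F W) Fintype.card_pos hm he
  refine mul_left_cancel₀ (mul_ne_zero (sub_pos.2 (one_lt_cast_card (α := F))).ne'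
    (sub_pos.2 hlt).ne') ?_
  linear_combination hlinear hp - hlinear hp'

end Disjoint

theorem exists_forall_eq_of_sumOn_hyperplane_eq [Finite F] {W : Submodule F V} {r : ℕ}
    (hW : finrank F W = r + 1) {h : V → ℝ} (h_inv : ScalarInvariant F h) {s : ℝ}
    (hs : ∀ A ≤ W, finrank F A = r → sumOn h A = s) : ∃ y, ∀ v ∈ W, v ≠ 0 → h v = y := by
  obtain rfl | hr := r.eq_zero_or_pos
  · obtain ⟨w, -, rfl⟩ := exists_eq_span_singleton_of_finrank_eq_one hW
    refine ⟨h w, fun v hv hv0 ↦ ?_⟩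
    obtain ⟨a, rfl⟩ := Submodule.mem_span_singleton.1 hv
    exact h_inv (left_ne_zero_of_smul hv0) w
  have hsub (U : Subspaces F W r) : sumOn (h ∘ W.subtype) U.1 = s := by
    rw [← sumOn_map W.injective_subtype]
    exact hs _ (Submodule.map_subtype_le W U.1) (by rw [Submodule.finrank_map_subtype_eq, U.2])
  obtain ⟨w, hw, hw0⟩ := W.exists_mem_ne_zero_of_ne_bot fun h0 ↦ by
    rw [h0, finrank_bot] at hW
    exact r.succ_ne_zero hW.symm
  refine ⟨h w, fun v hv hv0 ↦ ?_⟩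
  exact eq_of_notMem_of_notMem (V := W) (e := 1) (W := ⊥) (h := h ∘ W.subtype)
    (p := ⟨w, hw⟩) (p' := ⟨v, hv⟩) hr le_rfl (by rw [hW, finrank_bot, zero_add])
    (fun a ha u ↦ h_inv ha u) (fun U _ ↦ hsub U) (by simpa using hw0) (by simpa using hv0)

end Constancy

section ParameterOne

open Module (finrank)
open Submodule (span)

variable {F V : Type*} [Field F] [Fintype F] [AddCommGroup V] [Module F V]
  {m e : ℕ} {L : Finset (Subspaces F V m)}

local notation "q" => Fintype.card F

/-- The disjointness-counting property of a Cameron-Liebler set of `m`-dimensional subspaces with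
parameter one, where `V` has dimension `m + m + e`. -/
def IsParameterOne (e : ℕ) (L : Finset (Subspaces F V m)) : Prop :=
  ∀ W : Subspaces F V m,
    #{U ∈ L | Disjoint U.1 W.1} = if W ∈ L then 0 else extensionCount q m e m 1

/-- A function on the points of `V` whose sum over each `m`-dimensional subspace indicates
membership in `L`, and whose support is the set of points covered by `L`. The value at `0` is
unconstrained by the support condition but counts in the sums. -/
structure IsPotential [Fintype V] (L : Finset (Subspaces F V m)) (h : V → ℝ) : Prop where
  scalarInvariant : ScalarInvariant F h
  ne_zero_iff : ∀ v ≠ 0, h v ≠ 0 ↔ ∃ W ∈ L, v ∈ W.1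
  sumOn_eq : ∀ W : Subspaces F V m, sumOn h W.1 = if W ∈ L then 1 else 0

namespace IsParameterOne

theorem not_disjoint (hL : IsParameterOne e L) {W U : Subspaces F V m} (hW : W ∈ L) (hU : U ∈ L) :
    ¬Disjoint U.1 W.1 := fun hUW ↦ by
  have h := hL W
  rw [if_pos hW, card_eq_zero] at h
  exact notMem_empty U (h ▸ mem_filter.2 ⟨hU, hUW⟩)

theorem exists_disjoint_of_notMem (hL : IsParameterOne e L) (hm : 1 ≤ m) {W : Subspaces F V m}
    (hW : W ∉ L) : ∃ U ∈ L, Disjoint U.1 W.1 := by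
  have hpos : 0 < #{U ∈ L | Disjoint U.1 W.1} := by
    rw [hL W, if_neg hW]
    exact extensionCount_pos m e Fintype.card_pos hm
  obtain ⟨U, hU⟩ := card_pos.1 hpos
  exact ⟨U, (mem_filter.1 hU).1, (mem_filter.1 hU).2⟩

theorem exists_notMem_disjoint [Finite V] (hL : IsParameterOne e L)
    (hN : finrank F V = m + m + e) {W : Subspaces F V m} (hW : W ∈ L) :
    ∃ U ∉ L, Disjoint U.1 W.1 := by
  have : Fintype (Subspaces F V m) := Fintype.ofFinite _
  have hpos : 0 < #(extensions m ⊥ W.1) := by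
    rw [card_extensions (e := e) (by rw [hN, W.2]) disjoint_bot_left, finrank_bot]
    exact extensionCount_pos _ e Fintype.card_pos m.zero_le
  obtain ⟨U, hU⟩ := card_pos.1 hpos
  have hUW := (mem_extensions.1 hU).2
  exact ⟨U, fun hUL ↦ hL.not_disjoint hW hUL hUW, hUW⟩

theorem nonempty [FiniteDimensional F V] (hL : IsParameterOne e L) (hm : 1 ≤ m)
    (hN : finrank F V = m + m + e) : L.Nonempty := by
  obtain ⟨S, -, -, hS⟩ := exists_le_le_finrank_eq_add (F := F) (V := V) (T := ⊥) (S := ⊤) (j := m)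
    bot_le (by rw [finrank_bot, finrank_top, hN]; omega)
  rw [finrank_bot, zero_add] at hS
  by_cases hSL : ⟨S, hS⟩ ∈ L
  · exact ⟨_, hSL⟩
  · obtain ⟨U, hU, -⟩ := hL.exists_disjoint_of_notMem hm hSL
    exact ⟨U, hU⟩

theorem eq_filter_le_of_forall_mem [Fintype (Subspaces F V m)] (hL : IsParameterOne e L)
    (hm : 1 ≤ m) {p : V} (hp0 : p ≠ 0) (hp : ∀ W ∈ L, p ∈ W.1) :
    L = ({W | span F {p} ≤ W.1} : Finset (Subspaces F V m)) := by
  ext W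
  rw [mem_filter_univ, Submodule.span_singleton_le_iff_mem]
  refine ⟨hp W, fun hpW ↦ by_contra fun hW ↦ ?_⟩
  obtain ⟨U, hU, hUW⟩ := hL.exists_disjoint_of_notMem hm hW
  exact hp0 (Submodule.disjoint_def.1 hUW p (hp U hU) hpW)

theorem eq_filter_le_hyperplane [FiniteDimensional F V] [Fintype (Subspaces F V m)]
    (hL : IsParameterOne 0 L) (hm : 1 ≤ m) (hN : finrank F V = m + m) {H : Submodule F V}
    (hH : finrank F H + 1 = finrank F V) (hLH : ∀ W ∈ L, W.1 ≤ H) :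
    L = ({W | W.1 ≤ H} : Finset (Subspaces F V m)) := by
  ext W
  rw [mem_filter_univ]
  refine ⟨hLH W, fun hWH ↦ by_contra fun hW ↦ ?_⟩
  obtain ⟨U, hU, hUW⟩ := hL.exists_disjoint_of_notMem hm hW
  have hle := Submodule.finrank_mono (sup_le (hLH U hU) hWH)
  rw [finrank_sup_eq_of_disjoint hUW, U.2, W.2] at hle
  omega

section Dichotomy

variable [Fintype V]

theorem sumOn_eq_zero_of_disjoint (hL : IsParameterOne e L) {h : V → ℝ} (hh : IsPotential L h)
    {W : Subspaces F V m} (hW : W ∈ L) (U : Subspaces F V m) (hU : Disjoint U.1 W.1) :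
    sumOn h U.1 = 0 := by
  rw [hh.sumOn_eq, if_neg fun hUL ↦ hL.not_disjoint hW hUL hU]

theorem exists_isPotential (hL : IsParameterOne e L) (hm : 1 ≤ m) (hN : finrank F V = m + m + e) :
    ∃ h : V → ℝ, IsPotential L h := by
  have : Fintype (Subspaces F V m) := Fintype.ofFinite _
  obtain ⟨h, h_inv, ⟨t, ht, ht_eq⟩, hsum⟩ := exists_sumOn_eq hm hN
    (f := fun W : Subspaces F V m ↦ if W ∈ L then 1 else 0) (C := extensionCount q m e m 1)
    fun W ↦ by
      have hcard : #{U ∈ ({U | Disjoint U.1 W.1} : Finset (Subspaces F V m)) | U ∈ L} =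
          #{U ∈ L | Disjoint U.1 W.1} := by
        congr 1; ext U; simp [and_comm]
      rw [sum_boole, hcard, hL W]
      split_ifs <;> simp
  refine ⟨h, h_inv, fun v hv ↦ ?_, hsum⟩
  rw [ht_eq v hv, sumThrough, sum_boole, mul_ne_zero_iff_left ht, Nat.cast_ne_zero, card_ne_zero]
  simp [Finset.Nonempty, and_comm]

theorem eq_of_mem_sup (hL : IsParameterOne e L) (hm : 1 ≤ m)
    (hN : finrank F V = m + m + e) {h : V → ℝ} (hh : IsPotential L h) {W : Subspaces F V m}
    (hW : W ∈ L) {p p' : V} (hp : p ∉ W.1) (hp' : p' ∉ W.1) (hpp' : p' ∈ W.1 ⊔ span F {p}) :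
    h p' = h p :=
  eq_of_mem_sup_span_singleton (e := e) hm (by rw [hN, W.2]) hh.scalarInvariant
    (hL.sumOn_eq_zero_of_disjoint hh hW) hp hp' hpp'

theorem sumOn_add_eq_zero_or_one (hL : IsParameterOne e L) (hm : 1 ≤ m)
    (hN : finrank F V = m + m + e) {h : V → ℝ} (hh : IsPotential L h) {W : Subspaces F V m}
    (hW : W ∈ L) {A : Submodule F V} (hAW : A ≤ W.1) (hA : finrank F A + 1 = m) {p : V}
    (hp : p ∉ W.1) :
    sumOn h A + ((q : ℝ) ^ m - (q : ℝ) ^ finrank F A) * h p = 0 ∨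
      sumOn h A + ((q : ℝ) ^ m - (q : ℝ) ^ finrank F A) * h p = 1 := by
  have hpA : p ∉ A := fun h ↦ hp (hAW h)
  have hdim : finrank F ↥(A ⊔ span F {p}) = m := by
    rw [Submodule.finrank_sup_span_singleton hpA, hA]
  have hdisj : Disjoint W.1 (span F {p}) :=
    Submodule.disjoint_span_singleton.2 fun h ↦ absurd h hp
  have hconst (v) (hv : v ∈ A ⊔ span F {p}) (hvA : v ∉ A) : h v = h p :=
    hL.eq_of_mem_sup hm hN hh hW hp
      (fun hvW ↦ hvA ((sup_inf_eq_left_of_le_of_disjoint hAW hdisj).le ⟨hv, hvW⟩))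
      (sup_le_sup_right hAW _ hv)
  have hsum := sumOn_eq_of_forall_notMem le_sup_left hconst
  rw [hdim, hh.sumOn_eq ⟨_, hdim⟩] at hsum
  rw [← hsum]
  split_ifs <;> simp

theorem exists_const_compl_or_exists_const (hL : IsParameterOne e L) (hm : 1 ≤ m)
    (hN : finrank F V = m + m + e) {h : V → ℝ} (hh : IsPotential L h) {W : Subspaces F V m}
    (hW : W ∈ L) :
    (∃ y, ∀ v ∉ W.1, h v = y) ∨ ∃ y, ∀ v ∈ W.1, v ≠ 0 → h v = y := by
  refine or_iff_not_imp_left.2 fun hoff ↦ ?_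
  push Not at hoff
  obtain ⟨v, hv, hvv'⟩ : ∃ v ∉ W.1, ∃ v' ∉ W.1, h v < h v' := by
    obtain ⟨v, hv, -⟩ := hoff 0
    obtain ⟨v', hv', hne⟩ := hoff (h v)
    obtain hlt | hlt := hne.lt_or_gt
    exacts [⟨v', hv', v, hv, hlt⟩, ⟨v, hv, v', hv', hlt⟩]
  obtain ⟨v', hv', hlt⟩ := hvv'
  obtain ⟨r, rfl⟩ := Nat.exists_eq_add_of_le' hm
  refine exists_forall_eq_of_sumOn_hyperplane_eq W.2 hh.scalarInvariant
    (s := -(((q : ℝ) ^ (r + 1) - (q : ℝ) ^ r) * h v)) fun A hAW hA ↦ ?_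
  have hmul : ((q : ℝ) ^ (r + 1) - (q : ℝ) ^ r) * h v < ((q : ℝ) ^ (r + 1) - (q : ℝ) ^ r) * h v' :=
    mul_lt_mul_of_pos_left hlt (sub_pos.2 (pow_lt_pow_right₀ one_lt_cast_card r.lt_succ_self))
  have h₁ := hL.sumOn_add_eq_zero_or_one hm hN hh hW hAW (by rw [hA]) hv
  have h₂ := hL.sumOn_add_eq_zero_or_one hm hN hh hW hAW (by rw [hA]) hv'
  rw [hA] at h₁ h₂
  grind

theorem exists_forall_mem_of_const_compl (hL : IsParameterOne e L) (hm : 1 ≤ m)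
    (hN : finrank F V = m + m + e) {h : V → ℝ} (hh : IsPotential L h)
    (hconst : ∀ W ∈ L, ∃ y, ∀ v ∉ W.1, h v = y) : ∃ p ≠ 0, ∀ W ∈ L, p ∈ W.1 := by
  by_contra! hcommon
  have hmul (v : V) (hv : v ≠ 0) :
      ((q : ℝ) ^ finrank F V - (q : ℝ) ^ m) * h v = sumOn h (⊤ : Submodule F V) - 1 := by
    obtain ⟨W, hW, hvW⟩ := hcommon v hv
    obtain ⟨y, hy⟩ := hconst W hW
    rw [sumOn_eq_of_forall_notMem le_top fun u _ ↦ hy u, hh.sumOn_eq W, if_pos hW, finrank_top,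
      W.2, hy v hvW]
    ring
  have hpos : (0 : ℝ) < (q : ℝ) ^ finrank F V - (q : ℝ) ^ m :=
    sub_pos.2 (pow_lt_pow_right₀ one_lt_cast_card (by omega))
  have hsum (W : Subspaces F V m) := sumOn_eq_of_forall_ne_zero (W := W.1) fun v _ hv ↦
    eq_div_of_mul_eq hpos.ne' ((mul_comm _ _).trans (hmul v hv))
  obtain ⟨W, hW⟩ := hL.nonempty hm hN
  obtain ⟨U, hU, -⟩ := hL.exists_notMem_disjoint hN hW
  have hWU : sumOn h W.1 = sumOn h U.1 := by rw [hsum, hsum, W.2, U.2]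
  rw [hh.sumOn_eq, hh.sumOn_eq, if_pos hW, if_neg hU] at hWU
  exact one_ne_zero hWU

theorem eq_zero_of_not_const_compl (hL : IsParameterOne e L) (hm : 1 ≤ m)
    (hN : finrank F V = m + m + e) {h : V → ℝ} (hh : IsPotential L h) {W : Subspaces F V m}
    (hW : W ∈ L) (hoff : ¬∃ y, ∀ v ∉ W.1, h v = y) : e = 0 := by
  by_contra he
  obtain ⟨p, hp⟩ : ∃ p, p ∉ W.1 := by
    by_contra! hall
    exact hoff ⟨0, fun v hv ↦ absurd (hall v) hv⟩
  exact hoff ⟨h p, fun v hv ↦ eq_of_notMem_of_notMem hm (Nat.one_le_iff_ne_zero.2 he)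
    (by rw [hN, W.2]) hh.scalarInvariant (hL.sumOn_eq_zero_of_disjoint hh hW) hp hv⟩

theorem exists_const_of_not_const_compl (hL : IsParameterOne e L) (hm : 1 ≤ m)
    (hN : finrank F V = m + m + e) {h : V → ℝ} (hh : IsPotential L h) {W W' : Subspaces F V m}
    (hW : W ∈ L) (hoff : ¬∃ y, ∀ v ∉ W.1, h v = y) (hW' : W' ∈ L) :
    ∃ y, ∀ v ∈ W'.1, v ≠ 0 → h v = y := by
  refine (hL.exists_const_compl_or_exists_const hm hN hh hW').resolve_left ?_
  rintro ⟨y', hy'⟩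
  obtain ⟨y, hy⟩ := (hL.exists_const_compl_or_exists_const hm hN hh hW).resolve_left hoff
  obtain ⟨v, hvW, hvW'⟩ : ∃ v ∈ W.1, v ∉ W'.1 := SetLike.not_le_iff_exists.1 fun hle ↦
    hoff ⟨y', Subspaces.le_iff_eq.1 hle ▸ hy'⟩
  have hyy' : y = y' :=
    (hy v hvW fun hv ↦ hvW' (hv ▸ W'.1.zero_mem)).symm.trans (hy' v hvW')
  obtain ⟨U, hU, hUW'⟩ := hL.exists_notMem_disjoint hN hW'
  have hsumW := sumOn_eq_of_forall_ne_zero hy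
  have hsumU := sumOn_eq_of_forall_ne_zero (W := U.1) fun v hv hv0 ↦
    hy' v fun hvW' ↦ hv0 (Submodule.disjoint_def.1 hUW' v hv hvW')
  rw [hh.sumOn_eq, if_pos hW, W.2, hyy'] at hsumW
  rw [hh.sumOn_eq, if_neg hU, U.2] at hsumU
  exact one_ne_zero (hsumW.trans hsumU.symm)

theorem exists_notMem_of_forall_const (hL : IsParameterOne e L) (hm : 1 ≤ m)
    (hN : finrank F V = m + m + e) {h : V → ℝ} (hh : IsPotential L h)
    (hconst : ∀ W ∈ L, ∃ y, ∀ v ∈ W.1, v ≠ 0 → h v = y) : ∃ v, ∀ W ∈ L, v ∉ W.1 := by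
  by_contra! hcover
  have hpos : (0 : ℝ) < (q : ℝ) ^ m - 1 :=
    sub_pos.2 (one_lt_pow₀ one_lt_cast_card (by omega))
  have hval (v : V) (hv : v ≠ 0) : h v = (1 - h 0) / ((q : ℝ) ^ m - 1) := by
    obtain ⟨W, hW, hvW⟩ := hcover v
    obtain ⟨y, hy⟩ := hconst W hW
    have hsum := sumOn_eq_of_forall_ne_zero hy
    rw [hh.sumOn_eq, if_pos hW, W.2] at hsum
    rw [hy v hvW hv, eq_div_iff hpos.ne']
    linarith
  obtain ⟨W, hW⟩ := hL.nonempty hm hN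
  obtain ⟨U, hU, -⟩ := hL.exists_notMem_disjoint hN hW
  have hsum := sumOn_eq_of_forall_ne_zero (W := U.1) fun v _ hv ↦ hval v hv
  rw [hh.sumOn_eq, if_neg hU, U.2, mul_div_cancel₀ _ hpos.ne'] at hsum
  linarith

theorem exists_submodule_mem_iff (hL : IsParameterOne e L) (hm : 1 ≤ m)
    (hN : finrank F V = m + m + e) {h : V → ℝ} (hh : IsPotential L h) :
    ∃ X : Submodule F V, ∀ v, v ∈ X ↔ ∃ W ∈ L, v ∈ W.1 := by
  refine ⟨⟨⟨⟨{v | ∃ W ∈ L, v ∈ W.1}, ?_⟩, ?_⟩, ?_⟩, fun v ↦ Iff.rfl⟩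
  · rintro u v ⟨W', hW', hu⟩ ⟨W, hW, hv⟩
    by_cases huW : u ∈ W.1
    · exact ⟨W, hW, W.1.add_mem huW hv⟩
    have huvW : u + v ∉ W.1 := fun huv ↦ huW ((W.1.add_mem_iff_left hv).1 huv)
    have heq : h (u + v) = h u := hL.eq_of_mem_sup hm hN hh hW huW huvW
      (add_mem (Submodule.mem_sup_right (Submodule.mem_span_singleton_self u))
        (Submodule.mem_sup_left hv))
    have hu0 : u ≠ 0 := fun h0 ↦ huW (h0 ▸ W.1.zero_mem)
    have huv0 : u + v ≠ 0 := fun h0 ↦ huvW (h0 ▸ W.1.zero_mem)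
    exact (hh.ne_zero_iff _ huv0).1 (heq ▸ (hh.ne_zero_iff u hu0).2 ⟨W', hW', hu⟩)
  · obtain ⟨W, hW⟩ := hL.nonempty hm hN
    exact ⟨W, hW, W.1.zero_mem⟩
  · rintro a v ⟨W, hW, hv⟩
    exact ⟨W, hW, W.1.smul_mem a hv⟩

theorem exists_eq_filter_le_hyperplane [Fintype (Subspaces F V m)] (hL : IsParameterOne 0 L)
    (hm : 1 ≤ m) (hN : finrank F V = m + m) {h : V → ℝ} (hh : IsPotential L h)
    (hconst : ∀ W ∈ L, ∃ y, ∀ v ∈ W.1, v ≠ 0 → h v = y) :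
    ∃ H : Submodule F V, finrank F H + 1 = finrank F V ∧
      L = ({W | W.1 ≤ H} : Finset (Subspaces F V m)) := by
  obtain ⟨X, hX⟩ := hL.exists_submodule_mem_iff hm hN hh
  obtain ⟨v, hv⟩ := hL.exists_notMem_of_forall_const hm hN hh hconst
  have hXtop : finrank F X < finrank F V := Submodule.finrank_lt fun htop ↦ by
    obtain ⟨W, hW, hvW⟩ := (hX v).1 (htop ▸ Submodule.mem_top)
    exact hv W hW hvW
  obtain ⟨H, hXH, -, hH⟩ := exists_le_le_finrank_eq_add (le_top : X ≤ ⊤)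
    (j := finrank F V - 1 - finrank F X) (by rw [finrank_top]; omega)
  have hHV : finrank F H + 1 = finrank F V := by omega
  exact ⟨H, hHV, hL.eq_filter_le_hyperplane hm hN hHV fun W hW v hvW ↦
    hXH ((hX v).2 ⟨W, hW, hvW⟩)⟩

end Dichotomy

theorem eq_pencil_or_eq_filter_le_hyperplane [Finite V] [Fintype (Subspaces F V m)]
    (hL : IsParameterOne e L) (hm : 1 ≤ m) (hN : finrank F V = m + m + e) :
    (∃ P : Submodule F V, finrank F P = 1 ∧
      L = ({W | P ≤ W.1} : Finset (Subspaces F V m))) ∨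
    (e = 0 ∧ ∃ H : Submodule F V, finrank F H + 1 = finrank F V ∧
      L = ({W | W.1 ≤ H} : Finset (Subspaces F V m))) := by
  cases nonempty_fintype V
  obtain ⟨h, hh⟩ := hL.exists_isPotential hm hN
  by_cases hconst : ∀ W ∈ L, ∃ y, ∀ v ∉ W.1, h v = y
  · obtain ⟨p, hp0, hp⟩ := hL.exists_forall_mem_of_const_compl hm hN hh hconst
    exact .inl ⟨span F {p}, finrank_span_singleton hp0, hL.eq_filter_le_of_forall_mem hm hp0 hp⟩
  · obtain ⟨W, hW, hoff⟩ := not_forall₂.1 hconst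
    obtain rfl := hL.eq_zero_of_not_const_compl hm hN hh hW hoff
    exact .inr ⟨rfl, hL.exists_eq_filter_le_hyperplane hm hN hh fun W' hW' ↦
      hL.exists_const_of_not_const_compl hm hN hh hW hoff hW'⟩

end IsParameterOne

end ParameterOne

theorem stmt19_general {F V : Type*} [Field F] [Fintype F] [AddCommGroup V] [Module F V] {n k : ℕ}
    (hV : Module.finrank F V = n + 1) (hn : 2 * k + 1 ≤ n)
    [Fintype (Subspaces F V (k + 1))] (L : Finset (Subspaces F V (k + 1)))
    (hL : ∀ π : Subspaces F V (k + 1), (#{W ∈ L | W.1 ⊓ π.1 = ⊥} : ℝ) =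
      (1 - if π ∈ L then 1 else 0) * (gbinom (Fintype.card F) (n - k - 1) k *
        (Fintype.card F : ℝ) ^ (k ^ 2 + k))) :
    (∀ W ∈ L, ∀ W' ∈ L, W.1 ⊓ W'.1 ≠ ⊥) ∧
    ((∃ P : Submodule F V, Module.finrank F P = 1 ∧
        L = ({W | P ≤ W.1} : Finset (Subspaces F V (k + 1)))) ∨
     (n = 2 * k + 1 ∧ ∃ H : Submodule F V, Module.finrank F H = n ∧
        L = ({W | W.1 ≤ H} : Finset (Subspaces F V (k + 1))))) := by
  have : FiniteDimensional F V := Module.finite_of_finrank_eq_succ hV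
  have : Finite V := Module.finite_of_finite F
  obtain ⟨e, rfl⟩ := Nat.exists_eq_add_of_le hn
  have hext := extensionCount_add (Fintype.card F) (k + 1) e 1 k
  rw [add_comm 1 k] at hext
  have hcount : IsParameterOne e L := fun π ↦ by
    have hπ := hL π
    rw [show 2 * k + 1 + e - k - 1 = e + k by omega] at hπ
    simp only [disjoint_iff, hext]
    split_ifs at hπ ⊢ with hπL
    · rwa [sub_self, zero_mul, Nat.cast_eq_zero] at hπ
    · rw [sub_zero, one_mul] at hπ
      have hring : (gbinom (Fintype.card F) (e + k) k : ℝ) * (Fintype.card F : ℝ) ^ (k ^ 2 + k) =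
          (Fintype.card F : ℝ) ^ ((k + 1) * k) * gbinom (Fintype.card F) (e + k) k := by ring
      exact_mod_cast hπ.trans hring
  refine ⟨fun W hW W' hW' hWW' ↦ hcount.not_disjoint hW' hW (disjoint_iff.2 hWW'), ?_⟩
  refine (hcount.eq_pencil_or_eq_filter_le_hyperplane k.succ_pos (by rw [hV]; ring)).imp_right ?_
  rintro ⟨rfl, H, hH, hLH⟩
  exact ⟨rfl, H, by omega, hLH⟩

/-- A Cameron-Liebler set of $k$-spaces with parameter $x = 1$ is pairwise
intersecting, and is either a point-pencil, or $n = 2k+1$ and it is the set of all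
$k$-subspaces in a fixed hyperplane. -/
theorem stmt19 (q n k : ℕ) (F : Type) [Field F] [Fintype F]
    (hq : Fintype.card F = q) (hn : 2*k + 1 ≤ n)
    [Fintype {W : Submodule F (Fin (n+1) → F) // Module.finrank F W = k + 1}]
    (L : Finset {W : Submodule F (Fin (n+1) → F) // Module.finrank F W = k + 1})
    (hL : IsCameronLiebler q n k F L 1) :
    (∀ W ∈ L, ∀ W' ∈ L, W.1 ⊓ W'.1 ≠ ⊥) ∧
    ((∃ P : Submodule F (Fin (n+1) → F), Module.finrank F P = 1 ∧
        L = Finset.univ.filter fun W => P ≤ W.1) ∨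
     (n = 2*k + 1 ∧ ∃ H : Submodule F (Fin (n+1) → F), Module.finrank F H = n ∧
        L = Finset.univ.filter fun W => W.1 ≤ H)) := by
  subst hq
  exact stmt19_general (Module.finrank_fin_fun F) hn L hL.2
end
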